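/- arXiv:1502.07618 — 2 statements merged into one kernel-verified Lean document; each statement's English description precedes it below -/
import Mathlib

section
/- Suppose the invertible RDS φ on 𝕊¹ is compressible and has no deterministic fixed points; this holds if and only if φ is contractible and has reverse-minimal dynamics; and in these cases φ is stably synchronising. -/
open MeasureTheory Filter Topology Set ENNReal

noncomputable section

/-- The natural projection `π : ℝ → 𝕊¹ = ℝ/ℤ`. -/
def circleProj (x : ℝ) : UnitAddCircle := (x : UnitAddCircle)

/-- `f` is an orientation-preserving homeomorphism of the circle: it admits a strictly
monotone degree-one lift. -/
def OrientPreserving (f : UnitAddCircle ≃ₜ UnitAddCircle) : Prop :=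
  ∃ F : ℝ → ℝ, StrictMono F ∧ (∀ x : ℝ, F (x + 1) = F x + 1) ∧
    ∀ x : ℝ, f (circleProj x) = circleProj (F x)

/-- The anticlockwise distance `d₊(x,y) = min {r ≥ 0 : π(x' + r) = y}` (`x'` any lift of `x`). -/
def dPlus (x y : UnitAddCircle) : ℝ :=
  sInf {r : ℝ | 0 ≤ r ∧ ∃ x' : ℝ, circleProj x' = x ∧ circleProj (x' + r) = y}

/-- An invertible random dynamical system on the circle, in discrete or continuous time,
driven by a stationary memoryless noise process. -/
structure RDS (Ω : Type) [m : MeasurableSpace Ω] where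
  /-- the time set `𝕋⁺`: either `ℕ ∪ {0}` or `[0,∞)`, viewed inside `ℝ` -/
  T : Set ℝ
  T_cases : T = Set.range (fun n : ℕ => (n : ℝ)) ∨ T = Set.Ici (0 : ℝ)
  /-- the filtration -/
  F : ℝ → MeasurableSpace Ω
  F_le : ∀ t ∈ T, F t ≤ m
  F_mono : ∀ s ∈ T, ∀ t ∈ T, s ≤ t → F s ≤ F t
  /-- the probability measure -/
  P : Measure Ω
  P_prob : IsProbabilityMeasure P
  /-- the time-shift maps on the noise space -/
  θ : ℝ → Ω → Ω
  θ_zero : θ 0 = id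
  θ_add : ∀ s ∈ T, ∀ t ∈ T, θ (s + t) = θ t ∘ θ s
  θ_preserving : ∀ t ∈ T, MeasurePreserving (θ t) P P
  θ_adapted : ∀ s ∈ T, ∀ t ∈ T, @Measurable Ω Ω (F (s + t)) (F s) (θ t)
  θ_indep : ∀ t ∈ T, ∀ E A : Set Ω, MeasurableSet[F t] E →
    MeasurableSet[⨆ s ∈ T, F s] A → P (E ∩ θ t ⁻¹' A) = P E * P A
  /-- the random homeomorphisms -/
  φ : ℝ → Ω → UnitAddCircle ≃ₜ UnitAddCircle
  φ_orient : ∀ t ∈ T, ∀ ω, OrientPreserving (φ t ω)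
  φ_meas : ∀ t ∈ T, @Measurable (Ω × UnitAddCircle) UnitAddCircle
    ((F t).prod inferInstance) inferInstance (fun p => φ t p.1 p.2)
  φ_zero : ∀ ω, φ 0 ω = Homeomorph.refl UnitAddCircle
  φ_cocycle : ∀ s ∈ T, ∀ t ∈ T, ∀ ω x, φ (s + t) ω x = φ t (θ s ω) (φ s ω x)
  φ_cadlag_right : ∀ ω, ∀ t ∈ T, ∀ tn : ℕ → ℝ, (∀ n, tn n ∈ T) → Antitone tn →
    Tendsto tn atTop (𝓝 t) → ∀ (xn : ℕ → UnitAddCircle) (x : UnitAddCircle),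
      Tendsto xn atTop (𝓝 x) →
      Tendsto (fun n => φ (tn n) ω (xn n)) atTop (𝓝 (φ t ω x))
  /-- the left-limit maps -/
  φ_left_lim : ℝ → Ω → UnitAddCircle → UnitAddCircle
  φ_cadlag_left : ∀ ω, ∀ t ∈ T, ∀ tn : ℕ → ℝ, (∀ n, tn n ∈ T) → StrictMono tn →
    Tendsto tn atTop (𝓝 t) → ∀ (xn : ℕ → UnitAddCircle) (x : UnitAddCircle),
      Tendsto xn atTop (𝓝 x) →
      Tendsto (fun n => φ (tn n) ω (xn n)) atTop (𝓝 (φ_left_lim t ω x))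

/-- A probability measure on the circle is atomless if every singleton is null. -/
def Atomless (ρ : Measure UnitAddCircle) : Prop := ∀ x, ρ {x} = 0

/-- A measure on the circle has full support. -/
def FullSupport (ρ : Measure UnitAddCircle) : Prop :=
  ∀ U : Set UnitAddCircle, IsOpen U → U.Nonempty → 0 < ρ U

/-- The (topological) support of a measure on the circle. -/
def msupport (ρ : Measure UnitAddCircle) : Set UnitAddCircle :=
  {x | ∀ U : Set UnitAddCircle, IsOpen U → x ∈ U → 0 < ρ U}

namespace RDS

variable {Ω : Type} [m : MeasurableSpace Ω] (S : RDS Ω)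

/-- the future σ-algebra `𝓕₊ = σ(𝓕_t : t ∈ 𝕋⁺)`. -/
def Fplus : MeasurableSpace Ω := ⨆ t ∈ S.T, S.F t

/-- The filter "t → ∞ along the time set 𝕋⁺". -/
def tFilter : Filter ℝ := atTop ⊓ 𝓟 S.T

/-- two-point contractibility. -/
def Contractible : Prop := ∀ x y : UnitAddCircle, x ≠ y →
  0 < S.P {ω | ∃ t ∈ S.T, dist (S.φ t ω x) (S.φ t ω y) < dist x y}

/-- compressibility. -/
def Compressible : Prop := ∀ x y : UnitAddCircle, x ≠ y →
  0 < S.P {ω | ∃ t ∈ S.T, dPlus (S.φ t ω x) (S.φ t ω y) < dPlus x y}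

/-- `p` is a deterministic fixed point. -/
def DetFixedPoint (p : UnitAddCircle) : Prop :=
  ∀ᵐ ω ∂S.P, ∀ t ∈ S.T, S.φ t ω p = p

/-- `A` is forward-invariant. -/
def ForwardInvariant (A : Set UnitAddCircle) : Prop :=
  ∀ᵐ ω ∂S.P, ∀ t ∈ S.T, ⇑(S.φ t ω) '' A ⊆ A

/-- reverse-minimal dynamics: the only open forward-invariant sets are `∅` and `𝕊¹`. -/
def ReverseMinimal : Prop :=
  ∀ A : Set UnitAddCircle, IsOpen A → S.ForwardInvariant A → A = ∅ ∨ A = Set.univ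

/-- synchronisation. -/
def Synchronising : Prop := ∀ x y : UnitAddCircle,
  S.P {ω | Tendsto (fun t => dist (S.φ t ω x) (S.φ t ω y)) S.tFilter (𝓝 0)} = 1

/-- everywhere local stability. -/
def EverywhereLocallyStable : Prop := ∀ x : UnitAddCircle,
  S.P {ω | ∃ U : Set UnitAddCircle, IsOpen U ∧ x ∈ U ∧
    Tendsto (fun t => volume (⇑(S.φ t ω) '' U)) S.tFilter (𝓝 0)} = 1

/-- stable synchronisation. -/
def StablySynchronising : Prop := S.Synchronising ∧ S.EverywhereLocallyStable

/-- `ρ` is reverse-stationary: `ρ(A) = ∫ ρ(φ(t,ω)A) ℙ(dω)` for all `t ∈ 𝕋⁺`, Borel `A`. -/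
def ReverseStationary (ρ : Measure UnitAddCircle) : Prop :=
  ∀ t ∈ S.T, ∀ A : Set UnitAddCircle, MeasurableSet A →
    ρ A = ∫⁻ ω, ρ (⇑(S.φ t ω) '' A) ∂S.P

/-- `r` is a crack point of `ω`. -/
def CrackPoint (ω : Ω) (r : UnitAddCircle) : Prop :=
  ∀ G : Set UnitAddCircle, IsClosed G → r ∉ G →
    Tendsto (fun t => volume (⇑(S.φ t ω) '' G)) S.tFilter (𝓝 0)

/-- the set of contractive sample points. -/
def Ωc : Set Ω := {ω | ∃ r, S.CrackPoint ω r}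

/-- the reverse transition probabilities `φ̄ₓᵗ(A) = ℙ(ω : φ(t,ω)⁻¹(x) ∈ A)`. -/
def revTrans (t : ℝ) (x : UnitAddCircle) (A : Set UnitAddCircle) : ℝ≥0∞ :=
  S.P {ω | (S.φ t ω).symm x ∈ A}

/-- the forward transition probabilities `φₓᵗ(A) = ℙ(ω : φ(t,ω)x ∈ A)`. -/
def fwdTrans (t : ℝ) (x : UnitAddCircle) (A : Set UnitAddCircle) : ℝ≥0∞ :=
  S.P {ω | S.φ t ω x ∈ A}

/-- `ρ` is stationary for a transition family `ν`. -/
def StationaryFor (ν : ℝ → UnitAddCircle → Set UnitAddCircle → ℝ≥0∞)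
    (ρ : Measure UnitAddCircle) : Prop :=
  ∀ t ∈ S.T, ∀ A : Set UnitAddCircle, MeasurableSet A → ρ A = ∫⁻ x, ν t x A ∂ρ

/-- `ρ` is ergodic for a transition family `ν`. -/
def ErgodicFor (ν : ℝ → UnitAddCircle → Set UnitAddCircle → ℝ≥0∞)
    (ρ : Measure UnitAddCircle) : Prop :=
  S.StationaryFor ν ρ ∧ ∀ A : Set UnitAddCircle, MeasurableSet A →
    (∀ t ∈ S.T, ∀ᵐ x ∂ρ, x ∈ A → ν t x A = 1) → ρ A = 0 ∨ ρ A = 1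

end RDS



/-! ### Geometry of the circle -/

lemma circleProj_eq_iff {a b : ℝ} : circleProj a = circleProj b ↔ ∃ n : ℤ, b = a + n := by
  unfold circleProj
  rw [eq_comm, ← sub_eq_zero, ← AddCircle.coe_sub, AddCircle.coe_eq_zero_iff]
  constructor
  · rintro ⟨n, hn⟩
    refine ⟨n, ?_⟩
    simp at hn
    linarith
  · rintro ⟨n, hn⟩
    refine ⟨n, ?_⟩
    simp
    linarith

lemma circleProj_surj (x : UnitAddCircle) : ∃ a, circleProj a = x :=
  QuotientAddGroup.mk_surjective x

lemma dPlus_coe (a : ℝ) {r : ℝ} (h0 : 0 ≤ r) (h1 : r < 1) :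
    dPlus (circleProj a) (circleProj (a + r)) = r := by
  unfold dPlus
  apply IsLeast.csInf_eq
  refine ⟨⟨h0, a, rfl, rfl⟩, ?_⟩
  rintro s ⟨hs0, x', hx', hs⟩
  obtain ⟨n, hn⟩ := circleProj_eq_iff.1 hx'
  obtain ⟨k, hk⟩ := circleProj_eq_iff.1 hs
  by_contra hlt
  push Not at hlt
  have h2 : ((k + -n : ℤ) : ℝ) = r - s := by push_cast; linarith
  have h3 : (0 : ℝ) < ((k + -n : ℤ) : ℝ) := by rw [h2]; linarith
  have h4 : ((k + -n : ℤ) : ℝ) < 1 := by rw [h2]; linarith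
  have h5 : (0 : ℤ) < k + -n := by exact_mod_cast h3
  have h6 : k + -n < (1 : ℤ) := by exact_mod_cast h4
  omega

lemma exists_lift (a : ℝ) (y : UnitAddCircle) :
    ∃ r : ℝ, 0 ≤ r ∧ r < 1 ∧ y = circleProj (a + r) := by
  obtain ⟨b, rfl⟩ := circleProj_surj y
  refine ⟨Int.fract (b - a), Int.fract_nonneg _, Int.fract_lt_one _, ?_⟩
  rw [circleProj_eq_iff]
  refine ⟨-⌊b - a⌋, ?_⟩
  have := Int.self_sub_floor (b - a)
  push_cast
  linarith

lemma exists_lifts (x y : UnitAddCircle) :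
    ∃ a r : ℝ, 0 ≤ r ∧ r < 1 ∧ x = circleProj a ∧ y = circleProj (a + r) := by
  obtain ⟨a, rfl⟩ := circleProj_surj x
  obtain ⟨r, h0, h1, h⟩ := exists_lift a y
  exact ⟨a, r, h0, h1, rfl, h⟩

lemma dPlus_nonneg (x y : UnitAddCircle) : 0 ≤ dPlus x y := by
  obtain ⟨a, r, h0, h1, rfl, rfl⟩ := exists_lifts x y
  rwa [dPlus_coe a h0 h1]

lemma dPlus_lt_one (x y : UnitAddCircle) : dPlus x y < 1 := by
  obtain ⟨a, r, h0, h1, rfl, rfl⟩ := exists_lifts x y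
  rwa [dPlus_coe a h0 h1]

lemma dPlus_spec (a : ℝ) (y : UnitAddCircle) : y = circleProj (a + dPlus (circleProj a) y) := by
  obtain ⟨r, h0, h1, rfl⟩ := exists_lift a y
  rw [dPlus_coe a h0 h1]

lemma dPlus_eq_zero {x y : UnitAddCircle} : dPlus x y = 0 ↔ x = y := by
  obtain ⟨a, rfl⟩ := circleProj_surj x
  constructor
  · intro h
    have := dPlus_spec a y
    rw [h, add_zero] at this
    exact this.symm
  · rintro rfl
    have := dPlus_coe a le_rfl one_pos
    rwa [add_zero] at this

lemma dPlus_pos {x y : UnitAddCircle} (h : x ≠ y) : 0 < dPlus x y :=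
  lt_of_le_of_ne (dPlus_nonneg x y) fun h' => h (dPlus_eq_zero.1 h'.symm)

lemma circleProj_add_one (a : ℝ) : circleProj (a + 1) = circleProj a := by
  rw [eq_comm, circleProj_eq_iff]; exact ⟨1, by simp⟩

lemma dPlus_swap {x y : UnitAddCircle} (h : x ≠ y) : dPlus y x = 1 - dPlus x y := by
  have hp := dPlus_pos h
  obtain ⟨a, r, h0, h1, rfl, rfl⟩ := exists_lifts x y
  rw [dPlus_coe a h0 h1] at hp ⊢
  have := dPlus_coe (a + r) (r := 1 - r) (by linarith) (by linarith)
  rw [show a + r + (1 - r) = a + 1 by ring, circleProj_add_one] at this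
  exact this

lemma dist_circleProj {b s : ℝ} (hs : |s| ≤ 1 / 2) :
    dist (circleProj b) (circleProj (b + s)) = |s| := by
  rw [dist_comm, dist_eq_norm]
  unfold circleProj
  rw [← AddCircle.coe_sub, add_sub_cancel_left]
  exact (AddCircle.norm_coe_eq_abs_iff (1 : ℝ) one_ne_zero).2 (by simpa using hs)

lemma dist_eq_min (x y : UnitAddCircle) : dist x y = min (dPlus x y) (1 - dPlus x y) := by
  obtain ⟨a, r, h0, h1, rfl, rfl⟩ := exists_lifts x y
  rw [dPlus_coe a h0 h1]
  rcases le_total r (1 / 2) with h | h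
  · rw [dist_circleProj (by rwa [abs_of_nonneg h0]), abs_of_nonneg h0, min_eq_left (by linarith)]
  · have h2 : circleProj (a + r) = circleProj (a + (r - 1)) := by
      rw [← circleProj_add_one (a + (r - 1))]; ring_nf
    have h3 : |r - 1| = 1 - r := by rw [abs_of_nonpos (by linarith)]; ring
    rw [h2, dist_circleProj (by rw [h3]; linarith), h3, min_eq_right (by linarith)]

lemma dist_le_dPlus (x y : UnitAddCircle) : dist x y ≤ dPlus x y := by
  rw [dist_eq_min]; exact min_le_left _ _

lemma dPlus_eq_equivIco (x y : UnitAddCircle) :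
    dPlus x y = (AddCircle.equivIco (1 : ℝ) 0 (y - x) : ℝ) := by
  obtain ⟨a, r, h0, h1, rfl, rfl⟩ := exists_lifts x y
  rw [dPlus_coe a h0 h1]
  unfold circleProj
  rw [← AddCircle.coe_sub, add_sub_cancel_left, AddCircle.equivIco_coe_of_mem]
  exact ⟨h0, by simpa using h1⟩

lemma continuousAt_dPlus {z : UnitAddCircle × UnitAddCircle} (h : z.1 ≠ z.2) :
    ContinuousAt (fun p : UnitAddCircle × UnitAddCircle => dPlus p.1 p.2) z := by
  simp_rw [dPlus_eq_equivIco]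
  have h1 : ContinuousAt (fun p : UnitAddCircle × UnitAddCircle => p.2 - p.1) z := by fun_prop
  have h2 : ContinuousAt (AddCircle.equivIco (1 : ℝ) 0) (z.2 - z.1) := by
    apply AddCircle.continuousAt_equivIco
    simpa [sub_eq_zero] using h.symm
  exact continuousAt_subtype_val.comp
    (ContinuousAt.comp_of_eq (f := fun p : UnitAddCircle × UnitAddCircle => p.2 - p.1) h2 h1 rfl)

lemma measurable_dPlus :
    Measurable (fun p : UnitAddCircle × UnitAddCircle => dPlus p.1 p.2) := by
  simp_rw [dPlus_eq_equivIco]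
  have h2 : Measurable (AddCircle.equivIco (1 : ℝ) 0) :=
    (AddCircle.measurableEquivIco 1 0).measurable
  exact measurable_subtype_coe.comp (h2.comp (measurable_snd.sub measurable_fst))

/-- The open arc from `x` to `y`. -/
def arc (x y : UnitAddCircle) : Set UnitAddCircle := {u | x ≠ u ∧ dPlus x u < dPlus x y}

lemma measurableSet_arc_prod : MeasurableSet
    {p : (UnitAddCircle × UnitAddCircle) × UnitAddCircle | p.2 ∈ arc p.1.1 p.1.2} := by
  have h1 : Measurable (fun p : (UnitAddCircle × UnitAddCircle) × UnitAddCircle =>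
      dPlus p.1.1 p.2) :=
    measurable_dPlus.comp ((measurable_fst.comp measurable_fst).prodMk measurable_snd)
  have h2 : Measurable (fun p : (UnitAddCircle × UnitAddCircle) × UnitAddCircle =>
      dPlus p.1.1 p.1.2) := measurable_dPlus.comp measurable_fst
  have h3 : {p : (UnitAddCircle × UnitAddCircle) × UnitAddCircle | p.2 ∈ arc p.1.1 p.1.2} =
     {p | dPlus p.1.1 p.2 = 0}ᶜ ∩ {p | dPlus p.1.1 p.2 < dPlus p.1.1 p.1.2} := by
    ext p
    simp [arc, dPlus_eq_zero]
  rw [h3]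
  exact (h1 (measurableSet_singleton 0)).compl.inter (measurableSet_lt h1 h2)

lemma measurableSet_arc (x y : UnitAddCircle) : MeasurableSet (arc x y) :=
  measurable_prodMk_left (x := (x, y)) measurableSet_arc_prod

lemma mem_arc_iff {a r : ℝ} (h0 : 0 ≤ r) (h1 : r < 1) {u : UnitAddCircle} :
    u ∈ arc (circleProj a) (circleProj (a + r)) ↔ ∃ s, 0 < s ∧ s < r ∧ u = circleProj (a + s) := by
  unfold arc
  rw [mem_ofPred_eq, dPlus_coe a h0 h1]
  constructor
  · rintro ⟨h, h'⟩
    exact ⟨_, dPlus_pos h, h', dPlus_spec a u⟩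
  · rintro ⟨s, hs0, hs, rfl⟩
    have := dPlus_coe a hs0.le (hs.trans h1)
    refine ⟨fun h => ?_, by rwa [this]⟩
    rw [← dPlus_eq_zero, this] at h
    exact hs0.ne' h

lemma exists_near_lift (b : ℝ) (u : UnitAddCircle) :
    ∃ s : ℝ, |s| ≤ 1 / 2 ∧ u = circleProj (b + s) := by
  obtain ⟨r, h0, h1, rfl⟩ := exists_lift b u
  rcases le_total r (1 / 2) with h | h
  · exact ⟨r, by rwa [abs_of_nonneg h0], rfl⟩
  · refine ⟨r - 1, by rw [abs_of_nonpos (by linarith)]; linarith, ?_⟩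
    rw [← circleProj_add_one (b + (r - 1))]; ring_nf

lemma ball_eq_arc {a r : ℝ} (h0 : 0 ≤ r) (h1 : r < 1) :
    arc (circleProj a) (circleProj (a + r)) = Metric.ball (circleProj (a + r / 2)) (r / 2) := by
  ext u
  rw [mem_arc_iff h0 h1, Metric.mem_ball, dist_comm]
  constructor
  · rintro ⟨s, hs0, hs, rfl⟩
    have h2 : |s - r / 2| < r / 2 := by rw [abs_lt]; constructor <;> linarith
    have := dist_circleProj (b := a + r / 2) (s := s - r / 2) (by linarith)
    rw [show a + r / 2 + (s - r / 2) = a + s by ring] at this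
    rwa [this]
  · intro h
    obtain ⟨s, hs, rfl⟩ := exists_near_lift (a + r / 2) u
    rw [dist_circleProj hs, abs_lt] at h
    exact ⟨r / 2 + s, by linarith, by linarith, by ring_nf⟩

lemma isOpen_arc (x y : UnitAddCircle) : IsOpen (arc x y) := by
  obtain ⟨a, r, h0, h1, rfl, rfl⟩ := exists_lifts x y
  rw [ball_eq_arc h0 h1]; exact Metric.isOpen_ball

lemma exists_ball_eq_arc (x y : UnitAddCircle) :
    ∃ c, arc x y = Metric.ball c (dPlus x y / 2) := by
  obtain ⟨a, r, h0, h1, rfl, rfl⟩ := exists_lifts x y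
  exact ⟨_, by rw [ball_eq_arc h0 h1, dPlus_coe a h0 h1]⟩

lemma volume_arc_le (x y : UnitAddCircle) : volume (arc x y) ≤ ENNReal.ofReal (dPlus x y) := by
  obtain ⟨c, hc⟩ := exists_ball_eq_arc x y
  rw [hc]
  refine (measure_mono Metric.ball_subset_closedBall).trans ?_
  rw [AddCircle.volume_closedBall]
  apply ENNReal.ofReal_le_ofReal
  refine (min_le_right _ _).trans (by linarith)

lemma arc_subset_closedBall (x y : UnitAddCircle) : arc x y ⊆ Metric.closedBall x (dPlus x y) := by
  rintro u ⟨_, hu⟩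
  rw [Metric.mem_closedBall, dist_comm]
  exact (dist_le_dPlus x u).trans hu.le

lemma arc_cover {x y : UnitAddCircle} (h : x ≠ y) (u : UnitAddCircle) (hx : u ≠ x) (hy : u ≠ y) :
    u ∈ arc x y ∨ u ∈ arc y x := by
  by_cases hu : dPlus x u < dPlus x y
  · exact Or.inl ⟨hx.symm, hu⟩
  right
  push Not at hu
  refine ⟨hy.symm, ?_⟩
  obtain ⟨a, r, h0, h1, rfl, rfl⟩ := exists_lifts x y
  have hsw := dPlus_swap h
  have hup := dPlus_spec a u
  have hlt := dPlus_lt_one (circleProj a) u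
  rw [dPlus_coe a h0 h1] at hu hsw
  set q := dPlus (circleProj a) u
  have h3 := dPlus_coe (a + r) (r := q - r) (by linarith) (by linarith)
  rw [show a + r + (q - r) = a + q by ring, ← hup] at h3
  rw [h3, hsw]; linarith

/-! ### Orientation-preserving homeomorphisms -/

lemma OrientPreserving.dPlus_lt_iff {f : UnitAddCircle ≃ₜ UnitAddCircle} (hf : OrientPreserving f)
    (x u y : UnitAddCircle) : dPlus (f x) (f u) < dPlus (f x) (f y) ↔ dPlus x u < dPlus x y := by
  obtain ⟨F, hF, hF1, hFf⟩ := hf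
  obtain ⟨a, rfl⟩ := circleProj_surj x
  have key : ∀ v, dPlus (f (circleProj a)) (f v) = F (a + dPlus (circleProj a) v) - F a := by
    intro v
    conv_lhs => rw [dPlus_spec a v]
    rw [hFf, hFf]
    have h0 : F a ≤ F (a + dPlus (circleProj a) v) :=
      hF.monotone (by linarith [dPlus_nonneg (circleProj a) v])
    have h1 : F (a + dPlus (circleProj a) v) < F a + 1 := by
      rw [← hF1]; exact hF (by linarith [dPlus_lt_one (circleProj a) v])
    have := dPlus_coe (F a) (r := F (a + dPlus (circleProj a) v) - F a) (by linarith) (by linarith)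
    rwa [add_sub_cancel] at this
  rw [key, key, sub_lt_sub_iff_right, hF.lt_iff_lt, add_lt_add_iff_left]

lemma OrientPreserving.mem_arc_iff {f : UnitAddCircle ≃ₜ UnitAddCircle} (hf : OrientPreserving f)
    (x u y : UnitAddCircle) : f u ∈ arc (f x) (f y) ↔ u ∈ arc x y := by
  simp [arc, hf.dPlus_lt_iff]

lemma OrientPreserving.image_arc {f : UnitAddCircle ≃ₜ UnitAddCircle} (hf : OrientPreserving f)
    (x y : UnitAddCircle) : f '' arc x y = arc (f x) (f y) := by
  ext u
  obtain ⟨v, rfl⟩ := f.surjective u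
  rw [hf.mem_arc_iff, f.injective.mem_set_image]


/-! ### Arc masses for an atomless measure of full support -/

/-- mass of the arc from `z.1` to `z.2` -/
def arcMass (ρ : Measure UnitAddCircle) (z : UnitAddCircle × UnitAddCircle) : ℝ≥0∞ :=
  ρ (arc z.1 z.2)

/-- the smaller one of the masses of the two complementary arcs -/
def minMass (ρ : Measure UnitAddCircle) (z : UnitAddCircle × UnitAddCircle) : ℝ≥0∞ :=
  min (arcMass ρ z) (arcMass ρ z.swap)

lemma measurable_arcMass (ρ : Measure UnitAddCircle) [IsProbabilityMeasure ρ] :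
    Measurable (arcMass ρ) :=
  measurable_measure_prodMk_left measurableSet_arc_prod

lemma measurable_minMass (ρ : Measure UnitAddCircle) [IsProbabilityMeasure ρ] :
    Measurable (minMass ρ) :=
  (measurable_arcMass ρ).min ((measurable_arcMass ρ).comp measurable_swap)

lemma arc_self (x : UnitAddCircle) : arc x x = ∅ := by
  ext u
  simp only [arc, mem_ofPred_eq, mem_empty_iff_false, iff_false, not_and, not_lt]
  intro _
  rw [dPlus_eq_zero.2 rfl]; exact dPlus_nonneg _ _

lemma minMass_le_one (ρ : Measure UnitAddCircle) [IsProbabilityMeasure ρ]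
    (z : UnitAddCircle × UnitAddCircle) : minMass ρ z ≤ 1 :=
  (min_le_left _ _).trans prob_le_one

lemma one_le_arcMass_add {ρ : Measure UnitAddCircle} [IsProbabilityMeasure ρ] (hat : Atomless ρ)
    {x y : UnitAddCircle} (h : x ≠ y) : 1 ≤ arcMass ρ (x, y) + arcMass ρ (y, x) := by
  have h1 : (univ : Set UnitAddCircle) ⊆ ({x} ∪ {y}) ∪ (arc x y ∪ arc y x) := by
    intro u _
    by_cases hx : u = x
    · simp [hx]
    by_cases hy : u = y
    · simp [hy]
    exact Or.inr (arc_cover h u hx hy)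
  calc (1 : ℝ≥0∞) = ρ univ := measure_univ.symm
    _ ≤ ρ (({x} ∪ {y}) ∪ (arc x y ∪ arc y x)) := measure_mono h1
    _ ≤ (ρ {x} + ρ {y}) + (ρ (arc x y) + ρ (arc y x)) :=
      (measure_union_le _ _).trans (add_le_add (measure_union_le _ _) (measure_union_le _ _))
    _ = _ := by rw [hat x, hat y]; simp [arcMass]

lemma exists_ball_small {ρ : Measure UnitAddCircle} [IsProbabilityMeasure ρ] (hat : Atomless ρ)
    {δ : ℝ≥0∞} (hδ : 0 < δ) (x : UnitAddCircle) : ∃ r > 0, ρ (Metric.ball x r) < δ := by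
  have h1 : Tendsto (fun n : ℕ => ρ (Metric.closedBall x (1 / ((n : ℝ) + 1)))) atTop
      (𝓝 (ρ (⋂ n : ℕ, Metric.closedBall x (1 / ((n : ℝ) + 1))))) := by
    apply tendsto_measure_iInter_atTop
    · intro n; exact Metric.isClosed_closedBall.measurableSet.nullMeasurableSet
    · intro n k hnk
      apply Metric.closedBall_subset_closedBall
      exact Nat.one_div_le_one_div hnk
    · exact ⟨0, measure_ne_top _ _⟩
  have h2 : (⋂ n : ℕ, Metric.closedBall x (1 / ((n : ℝ) + 1))) = {x} := by
    ext u
    simp only [mem_iInter, Metric.mem_closedBall, mem_singleton_iff]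
    constructor
    · intro h
      have := ge_of_tendsto' (tendsto_one_div_add_atTop_nhds_zero_nat (𝕜 := ℝ)) h
      exact dist_le_zero.1 this
    · rintro rfl n
      rw [dist_self]; positivity
  rw [h2, hat x] at h1
  obtain ⟨n, hn⟩ := (h1.eventually_lt_const hδ).exists
  exact ⟨1 / ((n : ℝ) + 1), by positivity,
    (measure_mono Metric.ball_subset_closedBall).trans_lt hn⟩

lemma exists_small_arc {ρ : Measure UnitAddCircle} [IsProbabilityMeasure ρ] (hat : Atomless ρ)
    {δ : ℝ≥0∞} (hδ : 0 < δ) :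
    ∃ ε > 0, ∀ x y : UnitAddCircle, dPlus x y < ε → arcMass ρ (x, y) < δ := by
  choose r hr hrδ using fun x => exists_ball_small hat hδ x
  obtain ⟨ε, hε, h⟩ := lebesgue_number_lemma_of_metric (s := univ) isCompact_univ
    (c := fun x => Metric.ball x (r x)) (fun x => Metric.isOpen_ball)
    (fun x _ => mem_iUnion.2 ⟨x, Metric.mem_ball_self (hr x)⟩)
  refine ⟨ε, hε, fun x y hxy => ?_⟩
  obtain ⟨i, hi⟩ := h x (mem_univ _)
  refine (measure_mono ?_).trans_lt (hrδ i)
  refine Subset.trans ?_ hi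
  exact (arc_subset_closedBall x y).trans (Metric.closedBall_subset_ball hxy)

lemma exists_big_arc {ρ : Measure UnitAddCircle} [IsProbabilityMeasure ρ] (hfs : FullSupport ρ)
    {ε : ℝ} (hε : 0 < ε) :
    ∃ δ : ℝ≥0∞, 0 < δ ∧ ∀ x y : UnitAddCircle, ε ≤ dPlus x y → δ ≤ arcMass ρ (x, y) := by
  obtain ⟨t, -, htf, hcov⟩ := Metric.totallyBounded_iff.1
    (isCompact_univ (X := UnitAddCircle)).totallyBounded (ε / 4) (by positivity)
    |>.imp fun t ht => (⟨trivial, ht⟩ : True ∧ _)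
  have hne : t.Nonempty := by
    obtain ⟨i, hi, -⟩ := mem_iUnion₂.1 (hcov (mem_univ (0 : UnitAddCircle)))
    exact ⟨i, hi⟩
  obtain ⟨i₀, hi₀, hmin⟩ := htf.exists_minimalFor
    (fun i => ρ (Metric.ball i (ε / 4))) t hne
  refine ⟨ρ (Metric.ball i₀ (ε / 4)), hfs _ Metric.isOpen_ball
    ⟨i₀, Metric.mem_ball_self (by positivity)⟩, fun x y hxy => ?_⟩
  obtain ⟨c, hc⟩ := exists_ball_eq_arc x y
  obtain ⟨i, hi, hci⟩ := mem_iUnion₂.1 (hcov (mem_univ c))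
  have h1 : ρ (Metric.ball i₀ (ε / 4)) ≤ ρ (Metric.ball i (ε / 4)) := by
    rcases le_total (ρ (Metric.ball i₀ (ε / 4))) (ρ (Metric.ball i (ε / 4))) with h | h
    · exact h
    · exact hmin hi h
  refine h1.trans (measure_mono ?_)
  change _ ⊆ arc x y
  rw [hc]
  apply Metric.ball_subset_ball'
  rw [Metric.mem_ball, dist_comm] at hci
  linarith

lemma continuousAt_arcMass {ρ : Measure UnitAddCircle} [IsProbabilityMeasure ρ] (hat : Atomless ρ)
    {z : UnitAddCircle × UnitAddCircle} (h : z.1 ≠ z.2) : ContinuousAt (arcMass ρ) z := by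
  unfold ContinuousAt arcMass
  apply tendsto_measure_of_ae_tendsto_indicator_of_isFiniteMeasure (𝓝 z) (measurableSet_arc _ _)
    (fun z => measurableSet_arc z.1 z.2)
  have h1 : ∀ᵐ u ∂ρ, u ≠ z.1 := by
    rw [ae_iff]; simpa using hat z.1
  have h2 : ∀ᵐ u ∂ρ, u ≠ z.2 := by
    rw [ae_iff]; simpa using hat z.2
  filter_upwards [h1, h2] with u hu1 hu2
  have c1 : ContinuousAt (fun z : UnitAddCircle × UnitAddCircle => dPlus z.1 z.2) z :=
    continuousAt_dPlus h
  have c2 : ContinuousAt (fun z : UnitAddCircle × UnitAddCircle => dPlus z.1 u) z :=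
    ContinuousAt.comp_of_eq (f := fun z : UnitAddCircle × UnitAddCircle => (z.1, u))
      (continuousAt_dPlus (z := (z.1, u)) hu1.symm) (by fun_prop) rfl
  have hne : dPlus z.1 u ≠ dPlus z.1 z.2 := by
    intro he
    obtain ⟨a, ha⟩ := circleProj_surj z.1
    rw [← ha] at he
    have e1 := dPlus_spec a u
    rw [he, ← dPlus_spec a z.2] at e1
    exact hu2 e1
  have c3 : ∀ᶠ w : UnitAddCircle × UnitAddCircle in 𝓝 z, w.1 ≠ u :=
    continuousAt_fst.eventually_ne hu1.symm
  rcases lt_or_gt_of_ne hne with hl | hl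
  · filter_upwards [c3, c2.eventually_lt c1 hl] with w h3 h4
    exact ⟨fun _ => ⟨hu1.symm, hl⟩, fun _ => ⟨h3, h4⟩⟩
  · filter_upwards [c1.eventually_lt c2 hl] with w h4
    exact ⟨fun h5 => absurd h5.2 h4.not_gt, fun h5 => absurd h5.2 hl.not_gt⟩

lemma minMass_self (ρ : Measure UnitAddCircle) (x : UnitAddCircle) : minMass ρ (x, x) = 0 := by
  simp [minMass, arcMass, arc_self]

lemma continuous_minMass {ρ : Measure UnitAddCircle} [IsProbabilityMeasure ρ] (hat : Atomless ρ) :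
    Continuous (minMass ρ) := by
  rw [continuous_iff_continuousAt]
  rintro ⟨x, y⟩
  by_cases hxy : x = y
  · subst hxy
    rw [ContinuousAt, minMass_self, ENNReal.tendsto_nhds_zero]
    intro δ hδ
    obtain ⟨ε, hε, h⟩ := exists_small_arc hat hδ
    have h1 : ∀ᶠ w : UnitAddCircle × UnitAddCircle in 𝓝 (x, x), dist w.1 w.2 < ε := by
      have : ContinuousAt (fun w : UnitAddCircle × UnitAddCircle => dist w.1 w.2) (x, x) := by
        fun_prop
      exact this.eventually_lt_const (by simpa using hε)
    filter_upwards [h1] with w hw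
    by_cases hne : w.1 = w.2
    · rw [show w = (w.1, w.1) from Prod.ext rfl hne.symm, minMass_self]; exact zero_le
    rw [dist_eq_min, ← dPlus_swap hne, min_lt_iff] at hw
    rcases hw with hw | hw
    · exact (min_le_left _ _).trans (h _ _ hw).le
    · exact (min_le_right _ _).trans (h _ _ hw).le
  · have h1 := continuousAt_arcMass hat (z := (x, y)) hxy
    have h2 : ContinuousAt (fun z : UnitAddCircle × UnitAddCircle => arcMass ρ z.swap) (x, y) :=
      ContinuousAt.comp_of_eq (f := Prod.swap)
        (continuousAt_arcMass hat (z := (y, x)) (Ne.symm hxy)) continuous_swap.continuousAt rfl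
    exact h1.min h2

lemma exists_minMass_lower {ρ : Measure UnitAddCircle} [IsProbabilityMeasure ρ]
    (hfs : FullSupport ρ) {ε : ℝ} (hε : 0 < ε) :
    ∃ δ : ℝ≥0∞, 0 < δ ∧ ∀ z : UnitAddCircle × UnitAddCircle,
      minMass ρ z < δ → dist z.1 z.2 < ε := by
  obtain ⟨δ, hδ, h⟩ := exists_big_arc hfs hε
  refine ⟨δ, hδ, fun z hz => ?_⟩
  by_contra hd
  push Not at hd
  have h1 := hd.trans (dist_le_dPlus _ _)
  have h2 := hd.trans ((dist_comm _ _).trans_le (dist_le_dPlus _ _))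
  exact hz.not_ge (le_min (h _ _ h1) (h _ _ h2))


/-- Joint measurability of the inverses of a measurable family of homeomorphisms. -/
lemma measurable_symm_prod {Ω : Type} [MeasurableSpace Ω] {ψ : Ω → UnitAddCircle ≃ₜ UnitAddCircle}
    (h : Measurable (fun p : Ω × UnitAddCircle => ψ p.1 p.2)) :
    Measurable (fun p : Ω × UnitAddCircle => (ψ p.1).symm p.2) := by
  apply measurable_of_isClosed
  intro K hK
  obtain ⟨D, hDK, hDc, hD⟩ := (TopologicalSpace.IsSeparable.of_separableSpace K).exists_countable_dense_subset
  have key : (fun p : Ω × UnitAddCircle => (ψ p.1).symm p.2) ⁻¹' K =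
      ⋂ n : ℕ, ⋃ d ∈ D, {p : Ω × UnitAddCircle | dist (ψ p.1 d) p.2 < 1 / ((n : ℝ) + 1)} := by
    ext ⟨ω, x⟩
    simp only [mem_preimage, mem_iInter, mem_iUnion, mem_ofPred_eq, exists_prop]
    constructor
    · intro hx n
      have hc : ContinuousAt (fun d => dist (ψ ω d) x) ((ψ ω).symm x) := by fun_prop
      have h1 : ∀ᶠ d in 𝓝 ((ψ ω).symm x), dist (ψ ω d) x < 1 / ((n : ℝ) + 1) :=
        hc.eventually_lt_const (by simp; positivity)
      obtain ⟨d, hd, hdD⟩ := mem_closure_iff_nhds.1 (hD hx) _ h1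
      exact ⟨d, hdD, hd⟩
    · intro hx
      choose d hdD hd using hx
      obtain ⟨w, hw, g, hg, hlim⟩ := hK.isCompact.tendsto_subseq (fun n => hDK (hdD n))
      have h1 : Tendsto (fun n => dist (ψ ω (d (g n))) x) atTop (𝓝 (dist (ψ ω w) x)) :=
        (((ψ ω).continuous.tendsto w).comp hlim).dist tendsto_const_nhds
      have h2 : Tendsto (fun n => dist (ψ ω (d (g n))) x) atTop (𝓝 0) :=
        squeeze_zero (fun _ => dist_nonneg) (fun n => (hd (g n)).le)
          ((tendsto_one_div_add_atTop_nhds_zero_nat (𝕜 := ℝ)).comp hg.tendsto_atTop)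
      have h3 := tendsto_nhds_unique h1 h2
      rw [dist_eq_zero] at h3
      rwa [← h3, Homeomorph.symm_apply_apply]
  rw [key]
  refine MeasurableSet.iInter fun n => MeasurableSet.biUnion hDc fun d _ => ?_
  have h1 : Measurable (fun p : Ω × UnitAddCircle => ψ p.1 d) :=
    h.comp (measurable_fst.prodMk measurable_const)
  exact measurableSet_lt (h1.dist measurable_snd) measurable_const

lemma measurable_pair_aux {Ω : Type} [MeasurableSpace Ω] {ψ : Ω → UnitAddCircle ≃ₜ UnitAddCircle}
    (h : Measurable (fun p : Ω × UnitAddCircle => ψ p.1 p.2)) :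
    Measurable (fun p : (UnitAddCircle × UnitAddCircle) × Ω => (ψ p.2 p.1.1, ψ p.2 p.1.2)) := by
  have h1 : Measurable (fun p : (UnitAddCircle × UnitAddCircle) × Ω => ψ p.2 p.1.1) :=
    h.comp (measurable_snd.prodMk (measurable_fst.comp measurable_fst))
  have h2 : Measurable (fun p : (UnitAddCircle × UnitAddCircle) × Ω => ψ p.2 p.1.2) :=
    h.comp (measurable_snd.prodMk (measurable_snd.comp measurable_fst))
  exact h1.prodMk h2

lemma measurable_indicator_one_aux {γ : Type} [MeasurableSpace γ] {B : Set γ}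
    (hB : MeasurableSet B) : Measurable (B.indicator (1 : γ → ℝ≥0∞)) :=
  measurable_one.indicator hB

namespace RDS

variable {Ω : Type} [m : MeasurableSpace Ω] (S : RDS Ω)

lemma zero_mem : (0 : ℝ) ∈ S.T := by
  rcases S.T_cases with h | h <;> rw [h]
  · exact ⟨0, by simp⟩
  · simp

lemma add_mem {s t : ℝ} (hs : s ∈ S.T) (ht : t ∈ S.T) : s + t ∈ S.T := by
  rcases S.T_cases with h | h <;> rw [h] at hs ht ⊢
  · obtain ⟨a, rfl⟩ := hs
    obtain ⟨b, rfl⟩ := ht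
    exact ⟨a + b, by simp⟩
  · exact mem_Ici.2 (add_nonneg (mem_Ici.1 hs) (mem_Ici.1 ht))

lemma nonneg_of_mem {t : ℝ} (ht : t ∈ S.T) : 0 ≤ t := by
  rcases S.T_cases with h | h <;> rw [h] at ht
  · obtain ⟨a, rfl⟩ := ht
    simp
  · exact ht

/-- A countable grid of times: the fractions with denominator `q N`. -/
structure IsGrid (q : ℕ → ℕ) : Prop where
  pos : ∀ N, 0 < q N
  dvd : ∀ N, q N ∣ q (N + 1)
  le : ∀ N, q N ≤ 2 ^ N
  mem : ∀ N j : ℕ, (j : ℝ) / q N ∈ S.T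
  approx : ∀ t ∈ S.T, ∃ tn : ℕ → ℝ, (∀ n, ∃ N j : ℕ, tn n = (j : ℝ) / q N) ∧ Antitone tn ∧
    Tendsto tn atTop (𝓝 t)

lemma exists_grid : ∃ q, S.IsGrid q := by
  rcases S.T_cases with h | h
  · refine ⟨fun _ => 1, fun _ => one_pos, fun _ => dvd_rfl, fun N => Nat.one_le_two_pow,
      fun N j => ?_, fun t ht => ?_⟩
    · rw [h]; exact ⟨j, by simp⟩
    · rw [h] at ht
      obtain ⟨a, rfl⟩ := ht
      exact ⟨fun _ => a, fun _ => ⟨0, a, by simp⟩, antitone_const, tendsto_const_nhds⟩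
  · refine ⟨fun N => 2 ^ N, fun _ => by positivity, fun N => ⟨2, pow_succ _ _⟩, fun N => le_rfl,
      fun N j => ?_, fun t ht => ?_⟩
    · rw [h]; simp only [mem_Ici]; positivity
    · rw [h] at ht
      have ht0 : 0 ≤ t := ht
      refine ⟨fun n => (⌈t * 2 ^ n⌉₊ : ℝ) / (2 ^ n : ℕ), fun n => ⟨n, _, rfl⟩, ?_, ?_⟩
      · apply antitone_nat_of_succ_le
        intro n
        rw [div_le_div_iff₀ (by positivity) (by positivity)]
        have h1 : ⌈t * 2 ^ (n + 1)⌉₊ ≤ ⌈t * 2 ^ n⌉₊ * 2 := by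
          rw [Nat.ceil_le]
          push_cast
          have := Nat.le_ceil (t * 2 ^ n)
          rw [pow_succ]; linarith
        have h2 : (⌈t * 2 ^ (n + 1)⌉₊ : ℝ) ≤ ⌈t * 2 ^ n⌉₊ * 2 := by exact_mod_cast h1
        push_cast
        have h3 := mul_le_mul_of_nonneg_right h2 (pow_pos (two_pos (α := ℝ)) n).le
        calc _ ≤ _ := h3
          _ = _ := by ring
      · have hlim : Tendsto (fun n : ℕ => t + (1 / 2 : ℝ) ^ n) atTop (𝓝 (t + 0)) :=
          tendsto_const_nhds.add (tendsto_pow_atTop_nhds_zero_of_lt_one (by norm_num) (by norm_num))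
        rw [add_zero] at hlim
        refine tendsto_of_tendsto_of_tendsto_of_le_of_le tendsto_const_nhds hlim ?_ ?_
        · intro n
          have := Nat.le_ceil (t * 2 ^ n)
          simp only
          rw [le_div_iff₀ (by positivity)]
          push_cast; exact this
        · intro n
          have := (Nat.ceil_lt_add_one (a := t * 2 ^ n) (by positivity)).le
          simp only
          rw [div_le_iff₀ (by positivity)]
          push_cast
          rw [add_mul, ← mul_pow]
          norm_num
          exact this

variable {S}

/-- the grid as a set of times -/
def gridSet (q : ℕ → ℕ) : Set ℝ := {t | ∃ N j : ℕ, t = (j : ℝ) / q N}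

lemma countable_gridSet (q : ℕ → ℕ) : (gridSet q).Countable := by
  have : gridSet q = range (fun p : ℕ × ℕ => (p.2 : ℝ) / q p.1) := by
    ext t
    simp only [gridSet, mem_ofPred_eq, mem_range, Prod.exists]
    constructor
    · rintro ⟨N, j, h⟩; exact ⟨N, j, h.symm⟩
    · rintro ⟨N, j, h⟩; exact ⟨N, j, h.symm⟩
  rw [this]; exact countable_range _

lemma IsGrid.mem_T {q : ℕ → ℕ} (hq : S.IsGrid q) {t : ℝ} (ht : t ∈ gridSet q) : t ∈ S.T := by
  obtain ⟨N, j, rfl⟩ := ht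
  exact hq.mem N j

lemma IsGrid.dvd_of_le {q : ℕ → ℕ} (hq : S.IsGrid q) {N M : ℕ} (h : N ≤ M) : q N ∣ q M := by
  induction M, h using Nat.le_induction with
  | base => exact dvd_rfl
  | succ M _ ih => exact ih.trans (hq.dvd M)

lemma IsGrid.refine {q : ℕ → ℕ} (hq : S.IsGrid q) {N M : ℕ} (h : N ≤ M) (j : ℕ) :
    ∃ i : ℕ, (j : ℝ) / q N = (i : ℝ) / q M := by
  obtain ⟨c, hc⟩ := hq.dvd_of_le h
  refine ⟨j * c, ?_⟩
  have h1 : (q N : ℝ) ≠ 0 := by exact_mod_cast (hq.pos N).ne'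
  have h2 : (c : ℝ) ≠ 0 := by
    have := (hq.pos M).ne'
    rw [hc] at this
    exact_mod_cast (Nat.mul_ne_zero_iff.1 this).2
  rw [hc]; push_cast
  field_simp

lemma IsGrid.add {q : ℕ → ℕ} (hq : S.IsGrid q) {s t : ℝ} (hs : s ∈ gridSet q) (ht : t ∈ gridSet q) :
    s + t ∈ gridSet q := by
  obtain ⟨N, j, rfl⟩ := hs
  obtain ⟨M, k, rfl⟩ := ht
  obtain ⟨a, ha⟩ := hq.refine (le_max_left N M) j
  obtain ⟨b, hb⟩ := hq.refine (le_max_right N M) k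
  exact ⟨max N M, a + b, by rw [ha, hb]; push_cast; ring⟩

lemma IsGrid.natCast {q : ℕ → ℕ} (hq : S.IsGrid q) (k : ℕ) : (k : ℝ) ∈ gridSet q := by
  refine ⟨0, k * q 0, ?_⟩
  have h1 : (q 0 : ℝ) ≠ 0 := by exact_mod_cast (hq.pos 0).ne'
  push_cast; field_simp

/-- Right-continuity along the grid. -/
lemma IsGrid.exists_seq {q : ℕ → ℕ} (hq : S.IsGrid q) {t : ℝ} (ht : t ∈ S.T) :
    ∃ tn : ℕ → ℝ, (∀ n, tn n ∈ gridSet q ∧ t ≤ tn n) ∧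
      ∀ ω (xn : ℕ → UnitAddCircle) (x : UnitAddCircle), Tendsto xn atTop (𝓝 x) →
      Tendsto (fun n => S.φ (tn n) ω (xn n)) atTop (𝓝 (S.φ t ω x)) := by
  obtain ⟨tn, h1, h2, h3⟩ := hq.approx t ht
  exact ⟨tn, fun n => ⟨h1 n, h2.le_of_tendsto h3 n⟩, fun ω xn x hx =>
    S.φ_cadlag_right ω t ht tn (fun n => hq.mem_T (h1 n)) h2 h3 xn x hx⟩

/-- the two-point motion -/
def two (S : RDS Ω) (t : ℝ) (ω : Ω) (z : UnitAddCircle × UnitAddCircle) :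
    UnitAddCircle × UnitAddCircle := (S.φ t ω z.1, S.φ t ω z.2)

/-- A property closed along the pair motion passes from grid times to all times. -/
lemma IsGrid.closed_prop {q : ℕ → ℕ} (hq : S.IsGrid q) {ω : Ω} {z : UnitAddCircle × UnitAddCircle}
    {g : UnitAddCircle × UnitAddCircle → ℝ} {s c : ℝ}
    (hg : ∀ t ∈ S.T, ContinuousAt g (S.two t ω z))
    (h : ∀ t ∈ gridSet q, s ≤ t → g (S.two t ω z) ≤ c) :
    ∀ t ∈ S.T, s ≤ t → g (S.two t ω z) ≤ c := by
  intro t ht hst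
  obtain ⟨tn, h1, h2⟩ := hq.exists_seq ht
  have h3 : Tendsto (fun n => S.two (tn n) ω z) atTop (𝓝 (S.two t ω z)) :=
    (h2 ω _ _ tendsto_const_nhds).prodMk_nhds (h2 ω _ _ tendsto_const_nhds)
  exact le_of_tendsto' ((hg t ht).tendsto.comp h3) fun n => h _ (h1 n).1 (hst.trans (h1 n).2)

lemma Fplus_le (S : RDS Ω) : S.Fplus ≤ m := iSup₂_le S.F_le

lemma F_le_Fplus (S : RDS Ω) {t : ℝ} (ht : t ∈ S.T) : S.F t ≤ S.Fplus :=
  le_iSup₂ (f := fun t (_ : t ∈ S.T) => S.F t) t ht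

instance (S : RDS Ω) : IsProbabilityMeasure S.P := S.P_prob

/-- The independence of past and future, in functional form. -/
lemma markov (S : RDS Ω) {α β : Type} [MeasurableSpace α] [MeasurableSpace β] {s : ℝ} (hs : s ∈ S.T)
    {X : Ω → α} (hX : Measurable[S.F s] X) {Y : Ω → β} (hY : Measurable[S.Fplus] Y)
    {G : α × β → ℝ≥0∞} (hG : Measurable G) :
    ∫⁻ ω, G (X ω, Y (S.θ s ω)) ∂S.P = ∫⁻ ω, ∫⁻ ω', G (X ω, Y ω') ∂S.P ∂S.P := by
  have hX' : Measurable X := hX.mono (S.F_le s hs) le_rfl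
  have hY' : Measurable Y := hY.mono S.Fplus_le le_rfl
  have hθ := S.θ_preserving s hs
  have hYθ : Measurable (fun ω => Y (S.θ s ω)) := hY'.comp hθ.measurable
  have hind : S.P.map (fun ω => (X ω, Y (S.θ s ω))) = (S.P.map X).prod (S.P.map Y) := by
    have := Measure.isProbabilityMeasure_map (μ := S.P) hX'.aemeasurable
    have := Measure.isProbabilityMeasure_map (μ := S.P) hY'.aemeasurable
    symm
    apply Measure.prod_eq
    intro A B hA hB
    rw [Measure.map_apply (hX'.prodMk hYθ) (hA.prod hB), Measure.map_apply hX' hA,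
      Measure.map_apply hY' hB]
    exact S.θ_indep s hs (X ⁻¹' A) (Y ⁻¹' B) (hX hA) (hY hB)
  calc ∫⁻ ω, G (X ω, Y (S.θ s ω)) ∂S.P
      = ∫⁻ p, G p ∂(S.P.map (fun ω => (X ω, Y (S.θ s ω)))) :=
        (lintegral_map hG (hX'.prodMk hYθ)).symm
    _ = ∫⁻ a, ∫⁻ b, G (a, b) ∂(S.P.map Y) ∂(S.P.map X) := by
        have := Measure.isProbabilityMeasure_map (μ := S.P) hY'.aemeasurable
        rw [hind, lintegral_prod _ hG.aemeasurable]
    _ = ∫⁻ a, ∫⁻ ω', G (a, Y ω') ∂S.P ∂(S.P.map X) := by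
        refine lintegral_congr fun a => ?_
        exact lintegral_map (hG.comp measurable_prodMk_left) hY'
    _ = _ := by
        apply lintegral_map _ hX'
        exact (hG.comp (measurable_fst.prodMk (hY'.comp measurable_snd))).lintegral_prod_right'

lemma measurable_two (S : RDS Ω) {t : ℝ} (ht : t ∈ S.T) :
    @Measurable ((UnitAddCircle × UnitAddCircle) × Ω) _ (@Prod.instMeasurableSpace _ _ _ (S.F t)) _
      (fun p => S.two t p.2 p.1) := by
  exact @measurable_pair_aux Ω (S.F t) _ (S.φ_meas t ht)

lemma measurable_two_Fplus (S : RDS Ω) {t : ℝ} (ht : t ∈ S.T) :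
    @Measurable ((UnitAddCircle × UnitAddCircle) × Ω) _ (@Prod.instMeasurableSpace _ _ _ S.Fplus) _
      (fun p => S.two t p.2 p.1) :=
  (S.measurable_two ht).mono
    (sup_le_sup le_rfl (MeasurableSpace.comap_mono (S.F_le_Fplus ht))) le_rfl

lemma measurable_two_left (S : RDS Ω) {t : ℝ} (ht : t ∈ S.T) (z : UnitAddCircle × UnitAddCircle) :
    Measurable[S.F t] (fun ω => S.two t ω z) := by
  exact (S.measurable_two ht).comp (@measurable_prodMk_left _ _ _ (S.F t) z)

lemma measurable_two_left' (S : RDS Ω) {t : ℝ} (ht : t ∈ S.T)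
    (z : UnitAddCircle × UnitAddCircle) : Measurable (fun ω => S.two t ω z) :=
  (S.measurable_two_left ht z).mono (S.F_le t ht) le_rfl

lemma two_add (S : RDS Ω) {s t : ℝ} (hs : s ∈ S.T) (ht : t ∈ S.T) (ω : Ω)
    (z : UnitAddCircle × UnitAddCircle) :
    S.two (s + t) ω z = S.two t (S.θ s ω) (S.two s ω z) := by
  simp [two, S.φ_cocycle s hs t ht]

lemma two_zero (S : RDS Ω) (ω : Ω) (z : UnitAddCircle × UnitAddCircle) : S.two 0 ω z = z := by
  simp [two, S.φ_zero]

/-- Markov property of the two-point motion. -/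
lemma markov_two (S : RDS Ω) {s t : ℝ} (hs : s ∈ S.T) (ht : t ∈ S.T)
    {f : UnitAddCircle × UnitAddCircle → ℝ≥0∞} (hf : Measurable f)
    (z : UnitAddCircle × UnitAddCircle) :
    ∫⁻ ω, f (S.two (s + t) ω z) ∂S.P = ∫⁻ ω, ∫⁻ ω', f (S.two t ω' (S.two s ω z)) ∂S.P ∂S.P := by
  simp_rw [S.two_add hs ht]
  have h := @markov Ω m S (UnitAddCircle × UnitAddCircle) Ω _ S.Fplus s hs (fun ω => S.two s ω z)
    (S.measurable_two_left hs z) id (@measurable_id _ S.Fplus)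
    (fun p => f (S.two t p.2 p.1))
    (@Measurable.comp _ _ _ (@Prod.instMeasurableSpace _ _ _ S.Fplus) _ _ _ _ hf
      (S.measurable_two_Fplus ht))
  simpa using h

/-- Markov property for events. -/
lemma markov_event (S : RDS Ω) {s : ℝ} (hs : s ∈ S.T)
    {B : Set ((UnitAddCircle × UnitAddCircle) × Ω)}
    (hB : MeasurableSet[@Prod.instMeasurableSpace _ _ _ S.Fplus] B)
    (z : UnitAddCircle × UnitAddCircle) :
    S.P {ω | (S.two s ω z, S.θ s ω) ∈ B} = ∫⁻ ω, S.P {ω' | (S.two s ω z, ω') ∈ B} ∂S.P := by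
  have h := @markov Ω m S (UnitAddCircle × UnitAddCircle) Ω _ S.Fplus s hs (fun ω => S.two s ω z)
    (S.measurable_two_left hs z) id (@measurable_id _ S.Fplus)
    (B.indicator 1)
    (@measurable_indicator_one_aux _ (@Prod.instMeasurableSpace _ _ _ S.Fplus) _ hB)
  have hB' : MeasurableSet B := by
    have hle : @Prod.instMeasurableSpace (UnitAddCircle × UnitAddCircle) _ _ S.Fplus ≤
      Prod.instMeasurableSpace := sup_le_sup le_rfl (MeasurableSpace.comap_mono S.Fplus_le)
    exact hle _ hB
  have e1 : ∀ w : UnitAddCircle × UnitAddCircle,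
      ∫⁻ ω', B.indicator (1 : (UnitAddCircle × UnitAddCircle) × Ω → ℝ≥0∞) (w, ω') ∂S.P = S.P {ω' | (w, ω') ∈ B} := by
    intro w
    exact lintegral_indicator_one (μ := S.P) (s := {ω' | (w, ω') ∈ B}) (measurable_prodMk_left hB')
  have e2 : ∫⁻ ω, B.indicator (1 : (UnitAddCircle × UnitAddCircle) × Ω → ℝ≥0∞) (S.two s ω z, S.θ s ω) ∂S.P
      = S.P {ω | (S.two s ω z, S.θ s ω) ∈ B} :=
    lintegral_indicator_one (μ := S.P) (s := {ω | (S.two s ω z, S.θ s ω) ∈ B})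
      (((S.measurable_two_left' hs z).prodMk (S.θ_preserving s hs).measurable) hB')
  simp only [id, e1, e2] at h
  exact h

end RDS

namespace RDS

variable {Ω : Type} [m : MeasurableSpace Ω] {S : RDS Ω}

lemma measurable_inv (S : RDS Ω) {t : ℝ} (ht : t ∈ S.T) :
    @Measurable (Ω × UnitAddCircle) _ (@Prod.instMeasurableSpace _ _ (S.F t) _) _
      (fun p => (S.φ t p.1).symm p.2) :=
  @measurable_symm_prod Ω (S.F t) _ (S.φ_meas t ht)

lemma measurable_inv' (S : RDS Ω) {t : ℝ} (ht : t ∈ S.T) :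
    Measurable (fun p : Ω × UnitAddCircle => (S.φ t p.1).symm p.2) :=
  (S.measurable_inv ht).mono
    (sup_le_sup (MeasurableSpace.comap_mono (S.F_le t ht)) le_rfl) le_rfl

lemma measurable_inv_left (S : RDS Ω) {t : ℝ} (ht : t ∈ S.T) (x : UnitAddCircle) :
    Measurable[S.F t] (fun ω => (S.φ t ω).symm x) :=
  (S.measurable_inv ht).comp (@measurable_prodMk_right _ _ (S.F t) _ x)

lemma measurable_inv_left' (S : RDS Ω) {t : ℝ} (ht : t ∈ S.T) (x : UnitAddCircle) :
    Measurable (fun ω => (S.φ t ω).symm x) :=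
  (S.measurable_inv_left ht x).mono (S.F_le t ht) le_rfl

lemma inv_add (S : RDS Ω) {s t : ℝ} (hs : s ∈ S.T) (ht : t ∈ S.T) (ω : Ω) (x : UnitAddCircle) :
    (S.φ (s + t) ω).symm x = (S.φ s ω).symm ((S.φ t (S.θ s ω)).symm x) := by
  rw [Homeomorph.symm_apply_eq, S.φ_cocycle s hs t ht]
  simp

lemma inv_semigroup (S : RDS Ω) {s t : ℝ} (hs : s ∈ S.T) (ht : t ∈ S.T)
    {f : UnitAddCircle → ℝ≥0∞} (hf : Measurable f) (x : UnitAddCircle) :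
    ∫⁻ ω', ∫⁻ ω, f ((S.φ t ω).symm ((S.φ s ω').symm x)) ∂S.P ∂S.P
      = ∫⁻ ω, f ((S.φ (t + s) ω).symm x) ∂S.P := by
  simp_rw [S.inv_add ht hs]
  have h := @markov Ω m S Ω UnitAddCircle (S.F t) _ t ht id (@measurable_id _ (S.F t))
    (fun ω => (S.φ s ω).symm x)
    ((S.measurable_inv_left hs x).mono (S.F_le_Fplus hs) le_rfl)
    (fun p => f ((S.φ t p.1).symm p.2)) (hf.comp (S.measurable_inv ht))
  simp only [id] at h
  rw [h, lintegral_lintegral_swap]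
  have h1 : Measurable (fun p : Ω × Ω => (p.2, (S.φ s p.1).symm x)) :=
    measurable_snd.prodMk ((S.measurable_inv_left' hs x).comp measurable_fst)
  exact (hf.comp ((S.measurable_inv' ht).comp h1)).aemeasurable

lemma continuous_inv_average (S : RDS Ω) {t : ℝ} (ht : t ∈ S.T)
    (f : BoundedContinuousFunction UnitAddCircle NNReal) :
    Continuous (fun x => ∫⁻ ω, (f ((S.φ t ω).symm x) : ℝ≥0∞) ∂S.P) := by
  rw [continuous_iff_continuousAt]
  intro x
  obtain ⟨C, hC⟩ : ∃ C : NNReal, ∀ y, f y ≤ C := by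
    obtain ⟨C, hC⟩ := (isCompact_range f.continuous).bddAbove
    exact ⟨C, fun y => hC ⟨y, rfl⟩⟩
  apply tendsto_lintegral_filter_of_dominated_convergence (fun _ => (C : ℝ≥0∞))
  · refine Eventually.of_forall fun y => ?_
    exact (measurable_coe_nnreal_ennreal.comp
      (f.continuous.measurable.comp (S.measurable_inv_left' ht y)))
  · exact Eventually.of_forall fun y => Eventually.of_forall fun ω => by exact_mod_cast hC _
  · simp
  · refine Eventually.of_forall fun ω => ?_
    have h1 : Continuous (fun y => (f ((S.φ t ω).symm y) : ℝ≥0∞)) :=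
      ENNReal.continuous_coe.comp (f.continuous.comp (S.φ t ω).symm.continuous)
    exact h1.continuousAt

/-- Krylov–Bogoliubov averages. -/
def kbMeasure (S : RDS Ω) (q : ℕ → ℕ) (N : ℕ) : Measure UnitAddCircle :=
  ((4 ^ N : ℕ) : ℝ≥0∞)⁻¹ • ∑ i ∈ Finset.range (4 ^ N),
    S.P.map (fun ω => (S.φ ((i : ℝ) / q N) ω).symm 0)

lemma kb_lintegral {q : ℕ → ℕ} (hq : S.IsGrid q) (N : ℕ) {f : UnitAddCircle → ℝ≥0∞}
    (hf : Measurable f) : ∫⁻ x, f x ∂(S.kbMeasure q N) = ((4 ^ N : ℕ) : ℝ≥0∞)⁻¹ *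
      ∑ i ∈ Finset.range (4 ^ N), ∫⁻ ω, f ((S.φ ((i : ℝ) / q N) ω).symm 0) ∂S.P := by
  rw [kbMeasure, lintegral_smul_measure, lintegral_finsetSum_measure, smul_eq_mul]
  congr 1
  refine Finset.sum_congr rfl fun i _ => ?_
  rw [lintegral_map hf (S.measurable_inv_left' (hq.mem N i) 0)]

lemma kb_prob {q : ℕ → ℕ} (hq : S.IsGrid q) (N : ℕ) : IsProbabilityMeasure (S.kbMeasure q N) := by
  constructor
  have h := kb_lintegral hq N (f := fun _ => 1) measurable_const
  simp only [lintegral_const, measure_univ, mul_one, one_mul, Finset.sum_const, Finset.card_range,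
    nsmul_eq_mul] at h
  rw [h]
  apply ENNReal.inv_mul_cancel
  · exact_mod_cast (pow_pos (by norm_num) N).ne'
  · exact ENNReal.natCast_ne_top _

lemma sum_shift_le {a : ℕ → ℝ≥0∞} {C : ℝ≥0∞} (ha : ∀ i, a i ≤ C) (K j : ℕ) :
    (∑ i ∈ Finset.range K, a (i + j) ≤ ∑ i ∈ Finset.range K, a i + j * C) ∧
    (∑ i ∈ Finset.range K, a i ≤ ∑ i ∈ Finset.range K, a (i + j) + j * C) := by
  have b1 : ∀ g : ℕ → ℕ, ∑ i ∈ Finset.range j, a (g i) ≤ j * C := fun g =>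
    (Finset.sum_le_sum (fun i _ => ha (g i))).trans (by simp)
  have e1 := Finset.sum_range_add a K j
  have e2 := Finset.sum_range_add a j K
  constructor
  · calc _ = ∑ i ∈ Finset.range K, a (j + i) := by simp_rw [add_comm]
      _ ≤ ∑ i ∈ Finset.range (j + K), a i := by rw [e2]; exact le_add_self
      _ = ∑ i ∈ Finset.range K, a i + ∑ i ∈ Finset.range j, a (K + i) := by rw [add_comm j K, e1]
      _ ≤ _ := by gcongr; exact b1 _
  · calc _ ≤ ∑ i ∈ Finset.range (K + j), a i := by rw [e1]; exact le_self_add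
      _ = ∑ i ∈ Finset.range j, a i + ∑ i ∈ Finset.range K, a (j + i) := by rw [add_comm K j, e2]
      _ = ∑ i ∈ Finset.range K, a (i + j) + ∑ i ∈ Finset.range j, a i := by
        rw [add_comm]; simp_rw [add_comm j]
      _ ≤ _ := by gcongr; exact b1 _

/-- existence of a measure which is reverse-stationary along the grid -/
lemma exists_stationary {q : ℕ → ℕ} (hq : S.IsGrid q) : ∃ ρ : Measure UnitAddCircle,
    IsProbabilityMeasure ρ ∧ ∀ t ∈ gridSet q, ∀ A : Set UnitAddCircle, MeasurableSet A →
      ρ A = ∫⁻ ω, ρ (S.φ t ω '' A) ∂S.P := by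
  let ρN : ℕ → ProbabilityMeasure UnitAddCircle := fun N => ⟨S.kbMeasure q N, kb_prob hq N⟩
  let U : Ultrafilter ℕ := hyperfilter ℕ
  obtain ⟨ρ, hρ⟩ : ∃ ρ, Tendsto ρN (U : Filter ℕ) (𝓝 ρ) :=
    ⟨_, (Ultrafilter.map ρN U).le_nhds_lim⟩
  rw [ProbabilityMeasure.tendsto_iff_forall_lintegral_tendsto] at hρ
  refine ⟨ρ, inferInstance, ?_⟩
  intro t ht
  have htT := hq.mem_T ht
  have key : (ρ : Measure UnitAddCircle) =
      (S.P.prod (ρ : Measure UnitAddCircle)).map (fun p => (S.φ t p.1).symm p.2) := by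
    have := Measure.isProbabilityMeasure_map (μ := S.P.prod (ρ : Measure UnitAddCircle))
      (S.measurable_inv' htT).aemeasurable
    apply ext_of_forall_lintegral_eq_of_IsFiniteMeasure
    intro f
    have hfm : Measurable (fun x => (f x : ℝ≥0∞)) :=
      measurable_coe_nnreal_ennreal.comp f.continuous.measurable
    obtain ⟨C, hC⟩ : ∃ C : NNReal, ∀ y, f y ≤ C := by
      obtain ⟨C, hC⟩ := (isCompact_range f.continuous).bddAbove
      exact ⟨C, fun y => hC ⟨y, rfl⟩⟩
    have hCint : ∀ g : Ω → UnitAddCircle, ∫⁻ ω, (f (g ω) : ℝ≥0∞) ∂S.P ≤ C := by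
      intro g
      calc _ ≤ ∫⁻ ω, (C : ℝ≥0∞) ∂S.P := lintegral_mono fun ω => ENNReal.coe_le_coe.2 (hC (g ω))
        _ = C := by simp
    have hm : Measurable (fun a : Ω × UnitAddCircle => (f ((S.φ t a.1).symm a.2) : ℝ≥0∞)) :=
      hfm.comp (S.measurable_inv' htT)
    rw [lintegral_map hfm (S.measurable_inv' htT), lintegral_prod_symm' _ hm]
    have hcont := S.continuous_inv_average htT f
    let g : BoundedContinuousFunction UnitAddCircle NNReal :=
      BoundedContinuousFunction.mkOfCompact
        ⟨fun x => (∫⁻ ω, (f ((S.φ t ω).symm x) : ℝ≥0∞) ∂S.P).toNNReal, by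
          rw [continuous_iff_continuousAt]
          intro x
          exact (ENNReal.tendsto_toNNReal (ne_top_of_le_ne_top ENNReal.coe_ne_top (hCint _))).comp
            hcont.continuousAt⟩
    have hg : ∀ x, (g x : ℝ≥0∞) = ∫⁻ ω, (f ((S.φ t ω).symm x) : ℝ≥0∞) ∂S.P := fun x =>
      ENNReal.coe_toNNReal (ne_top_of_le_ne_top ENNReal.coe_ne_top (hCint _))
    have lf := hρ f
    have lg := hρ g
    simp only [hg] at lg
    obtain ⟨N₀, j₀, rfl⟩ := ht
    set t : ℝ := (j₀ : ℝ) / q N₀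
    have ht0 : 0 ≤ t := by positivity
    let e : ℕ → ℝ≥0∞ := fun N => ENNReal.ofReal (t * C * (1 / 2) ^ N)
    have he : Tendsto e (U : Filter ℕ) (𝓝 0) := by
      have h1 : Tendsto (fun N : ℕ => t * C * (1 / 2 : ℝ) ^ N) atTop (𝓝 (t * C * 0)) :=
        tendsto_const_nhds.mul (tendsto_pow_atTop_nhds_zero_of_lt_one (by norm_num) (by norm_num))
      have h2 := ENNReal.tendsto_ofReal h1
      simp only [mul_zero, ENNReal.ofReal_zero] at h2
      exact h2.mono_left Nat.hyperfilter_le_atTop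
    have hev : ∀ᶠ N in (U : Filter ℕ), N₀ ≤ N :=
      (eventually_ge_atTop N₀).filter_mono Nat.hyperfilter_le_atTop
    have main : ∀ N, N₀ ≤ N →
        (∫⁻ x, ∫⁻ ω, (f ((S.φ t ω).symm x) : ℝ≥0∞) ∂S.P ∂(S.kbMeasure q N) ≤
          ∫⁻ x, (f x : ℝ≥0∞) ∂(S.kbMeasure q N) + e N) ∧
        (∫⁻ x, (f x : ℝ≥0∞) ∂(S.kbMeasure q N) ≤
          ∫⁻ x, ∫⁻ ω, (f ((S.φ t ω).symm x) : ℝ≥0∞) ∂S.P ∂(S.kbMeasure q N) + e N) := by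
      intro N hN
      obtain ⟨j, hj⟩ := hq.refine hN j₀
      have hqN : (q N : ℝ) ≠ 0 := by exact_mod_cast (hq.pos N).ne'
      rw [kb_lintegral hq N hfm, kb_lintegral hq N hcont.measurable]
      have hs : ∀ i : ℕ, ∫⁻ ω', ∫⁻ ω, (f ((S.φ t ω).symm ((S.φ ((i : ℝ) / q N) ω').symm 0)) : ℝ≥0∞)
          ∂S.P ∂S.P = ∫⁻ ω, (f ((S.φ (((i + j : ℕ) : ℝ) / q N) ω).symm 0) : ℝ≥0∞) ∂S.P := by
        intro i
        rw [S.inv_semigroup (hq.mem N i) htT hfm]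
        have : t + (i : ℝ) / q N = ((i + j : ℕ) : ℝ) / q N := by
          change (j₀ : ℝ) / q N₀ + _ = _
          rw [hj]; push_cast; ring
        rw [this]
      simp_rw [hs]
      have hsum := sum_shift_le
        (a := fun i : ℕ => ∫⁻ ω, (f ((S.φ ((i : ℝ) / q N) ω).symm 0) : ℝ≥0∞) ∂S.P)
        (fun i => hCint _) (4 ^ N) j
      have hee : ((4 ^ N : ℕ) : ℝ≥0∞)⁻¹ * (j * C) ≤ e N := by
        have h4 : (0 : ℝ) < ((4 ^ N : ℕ) : ℝ) := by positivity
        have h1 : ((4 ^ N : ℕ) : ℝ≥0∞)⁻¹ * (j * C) =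
            ENNReal.ofReal (((4 ^ N : ℕ) : ℝ)⁻¹ * (j * C)) := by
          rw [ENNReal.ofReal_mul (by positivity), ENNReal.ofReal_inv_of_pos h4,
            ENNReal.ofReal_mul (by positivity)]
          simp only [ENNReal.ofReal_natCast, ENNReal.ofReal_coe_nnreal]
        rw [h1]
        apply ENNReal.ofReal_le_ofReal
        have h2 : (j : ℝ) = t * q N := by
          change _ = (j₀ : ℝ) / q N₀ * q N
          rw [hj]; field_simp
        have h3 : (q N : ℝ) ≤ 2 ^ N := by exact_mod_cast hq.le N
        have h5 : ((4 ^ N : ℕ) : ℝ) = 2 ^ N * 2 ^ N := by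
          push_cast; rw [← mul_pow]; norm_num
        rw [h5, inv_mul_le_iff₀ (by positivity), h2]
        have h6 : (2 : ℝ) ^ N * 2 ^ N * (t * C * (1 / 2) ^ N) = t * C * 2 ^ N := by
          rw [one_div, inv_pow]; field_simp
        rw [h6]
        have h7 : 0 ≤ t * C := by positivity
        nlinarith
      constructor
      · refine (mul_le_mul_right hsum.1 _).trans ?_
        rw [mul_add]
        gcongr
      · refine (mul_le_mul_right hsum.2 _).trans ?_
        rw [mul_add]
        gcongr
    apply le_antisymm
    · have := le_of_tendsto_of_tendsto lf (lg.add he) (hev.mono fun N hN => (main N hN).2)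
      simpa using this
    · have := le_of_tendsto_of_tendsto lg (lf.add he) (hev.mono fun N hN => (main N hN).1)
      simpa using this
  intro A hA
  conv_lhs => rw [key, Measure.map_apply (S.measurable_inv' htT) hA,
    Measure.prod_apply (S.measurable_inv' htT hA)]
  refine lintegral_congr fun ω => ?_
  congr 1
  ext x
  simp only [mem_preimage, mem_image]
  constructor
  · intro h; exact ⟨_, h, by simp⟩
  · rintro ⟨y, hy, rfl⟩; simpa using hy

end RDS

namespace RDS

variable {Ω : Type} [m : MeasurableSpace Ω] {S : RDS Ω}

/-- Stationarity along the grid. -/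
def GridStat (S : RDS Ω) (q : ℕ → ℕ) (ρ : Measure UnitAddCircle) : Prop :=
  ∀ t ∈ gridSet q, ∀ A : Set UnitAddCircle, MeasurableSet A →
      ρ A = ∫⁻ ω, ρ (S.φ t ω '' A) ∂S.P

/-- backward invariance of closed sets extends from the grid to all times -/
lemma IsGrid.closed_invariant {q : ℕ → ℕ} (hq : S.IsGrid q) {ω : Ω} {K : Set UnitAddCircle}
    (hK : IsClosed K) (h : ∀ t ∈ gridSet q, S.φ t ω '' Kᶜ ⊆ Kᶜ) :
    ∀ t ∈ S.T, S.φ t ω '' Kᶜ ⊆ Kᶜ := by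
  intro t ht
  rintro _ ⟨x, hx, rfl⟩ hy
  obtain ⟨tn, h1, h2⟩ := hq.exists_seq ht
  have hmem : ∀ n, (S.φ (tn n) ω).symm (S.φ t ω x) ∈ K := by
    intro n
    by_contra hn
    exact h (tn n) (h1 n).1 ⟨_, hn, rfl⟩ (by simpa using hy)
  obtain ⟨w, hw, σ, hσ, hlim⟩ := hK.isCompact.tendsto_subseq hmem
  -- extend the subsequence limit through the ultrafilter-free route
  let xn : ℕ → UnitAddCircle := fun n =>
    open Classical in if n ∈ range σ then (S.φ (tn n) ω).symm (S.φ t ω x) else w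
  have hxn : Tendsto xn atTop (𝓝 w) := by
    rw [Metric.tendsto_atTop] at hlim ⊢
    intro ε hε
    obtain ⟨N, hN⟩ := hlim ε hε
    refine ⟨σ N, fun n hn => ?_⟩
    by_cases hr : n ∈ range σ
    · obtain ⟨k, rfl⟩ := hr
      have := hN k (hσ.le_iff_le.1 hn)
      simpa [xn] using this
    · simp only [xn, if_neg hr, dist_self]; exact hε
  have h3 := (h2 ω xn w hxn).comp hσ.tendsto_atTop
  have h4 : ((fun n => S.φ (tn n) ω (xn n)) ∘ σ) = fun _ => S.φ t ω x := by
    funext k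
    simp [xn]
  rw [h4] at h3
  have h5 := tendsto_nhds_unique tendsto_const_nhds h3
  have : x = w := (S.φ t ω).injective h5
  exact hx (this ▸ hw)

lemma ae_grid {q : ℕ → ℕ} {p : ℝ → Ω → Prop} (h : ∀ t ∈ gridSet q, ∀ᵐ ω ∂S.P, p t ω) :
    ∀ᵐ ω ∂S.P, ∀ t ∈ gridSet q, p t ω :=
  (ae_ball_iff (countable_gridSet q)).2 h

lemma measurable_image {t : ℝ} (ht : t ∈ S.T) (ρ : Measure UnitAddCircle) [IsProbabilityMeasure ρ]
    {A : Set UnitAddCircle} (hA : MeasurableSet A) : Measurable (fun ω => ρ (S.φ t ω '' A)) := by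
  have h := measurable_measure_prodMk_left (ν := ρ) (S.measurable_inv' ht hA)
  convert h using 2 with ω
  congr 1
  ext x
  simp only [mem_preimage, mem_image]
  constructor
  · rintro ⟨y, hy, rfl⟩; simpa using hy
  · intro h; exact ⟨_, h, by simp⟩

lemma GridStat.fullSupport {q : ℕ → ℕ} (hq : S.IsGrid q) {ρ : Measure UnitAddCircle}
    [IsProbabilityMeasure ρ] (hρ : S.GridStat q ρ) (hRM : S.ReverseMinimal) : FullSupport ρ := by
  have hopen : IsOpen (ρ.supportᶜ) := Measure.isClosed_support.isOpen_compl
  have hnull : ρ (ρ.supportᶜ) = 0 := Measure.measure_compl_support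
  have hinv : S.ForwardInvariant (ρ.supportᶜ) := by
    have : ∀ᵐ ω ∂S.P, ∀ t ∈ gridSet q, S.φ t ω '' (ρ.supportᶜ) ⊆ ρ.supportᶜ := by
      refine ae_grid fun t ht => ?_
      have h1 := hρ t ht _ hopen.measurableSet
      rw [hnull, eq_comm, lintegral_eq_zero_iff (measurable_image (hq.mem_T ht) ρ
        hopen.measurableSet)] at h1
      filter_upwards [h1] with ω hω
      intro y hy hys
      have hU := (S.φ t ω).isOpenMap _ hopen
      rw [Measure.mem_support_iff_forall] at hys
      exact (hys _ (hU.mem_nhds hy)).ne' hω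
    filter_upwards [this] with ω hω
    exact hq.closed_invariant Measure.isClosed_support hω
  intro U hU hne
  rcases hRM _ hopen hinv with h | h
  · obtain ⟨x, hx⟩ := hne
    have hx' : x ∈ ρ.support := by
      by_contra hc
      have : x ∈ ρ.supportᶜ := hc
      rw [h] at this; exact this
    rw [Measure.mem_support_iff_forall] at hx'
    exact hx' _ (hU.mem_nhds hx)
  · rw [h, measure_univ] at hnull
    exact absurd hnull one_ne_zero

lemma infinite_circle : (univ : Set UnitAddCircle).Infinite := by
  intro h
  have h1 : Function.Injective (fun n : ℕ => circleProj (1 / ((n : ℝ) + 2))) := by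
    intro a b hab
    simp only [circleProj_eq_iff] at hab
    obtain ⟨k, hk⟩ := hab
    have ha : 0 < 1 / ((a : ℝ) + 2) := by positivity
    have hb : 0 < 1 / ((b : ℝ) + 2) := by positivity
    have ha' : 1 / ((a : ℝ) + 2) < 1 := by
      rw [div_lt_one (by positivity)]; have := Nat.cast_nonneg (α := ℝ) a; linarith
    have hb' : 1 / ((b : ℝ) + 2) < 1 := by
      rw [div_lt_one (by positivity)]; have := Nat.cast_nonneg (α := ℝ) b; linarith
    have hk0 : k = 0 := by
      have h1 : (k : ℝ) < 1 := by linarith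
      have h2 : (-1 : ℝ) < k := by linarith
      have h1' : k < 1 := by exact_mod_cast h1
      have h2' : -1 < k := by exact_mod_cast h2
      omega
    subst hk0
    simp only [Int.cast_zero, add_zero] at hk
    have : (a : ℝ) = b := by
      field_simp at hk
      linarith
    exact_mod_cast this
  exact (infinite_range_of_injective h1) (h.subset (subset_univ _))

lemma GridStat.atomless {q : ℕ → ℕ} (hq : S.IsGrid q) {ρ : Measure UnitAddCircle}
    [IsProbabilityMeasure ρ] (hρ : S.GridStat q ρ) (hRM : S.ReverseMinimal) : Atomless ρ := by
  by_contra hat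
  simp only [Atomless, not_forall] at hat
  obtain ⟨x₀, hx₀⟩ := hat
  have hfin : ∀ ε : ℝ≥0∞, 0 < ε → {x : UnitAddCircle | ε ≤ ρ {x}}.Finite := by
    intro ε hε
    apply Measure.finite_const_le_meas_of_disjoint_iUnion ρ hε (fun x => measurableSet_singleton x)
    · intro x y hxy
      simpa using hxy
    · exact measure_ne_top _ _
  have hF := hfin (ρ {x₀}) (pos_iff_ne_zero.2 hx₀)
  obtain ⟨x₁, hx₁, hmax⟩ := Set.exists_max_image _ (fun x => ρ {x}) hF ⟨x₀, le_refl (ρ {x₀})⟩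
  have hmax' : ∀ x, ρ {x} ≤ ρ {x₁} := by
    intro x
    by_cases h : ρ {x₀} ≤ ρ {x}
    · exact hmax x h
    · exact (not_le.1 h).le.trans hx₁
  set c := ρ {x₁} with hc
  have hcpos : 0 < c := (pos_iff_ne_zero.2 hx₀).trans_le hx₁
  set B : Set UnitAddCircle := {x | c ≤ ρ {x}} with hB
  have hBfin : B.Finite := hfin c hcpos
  have hBne : B.Nonempty := ⟨x₁, le_refl (ρ {x₁})⟩
  have hinvt : ∀ t ∈ gridSet q, ∀ᵐ ω ∂S.P, ∀ x ∈ B, S.φ t ω x ∈ B := by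
    intro t ht
    rw [ae_ball_iff hBfin.countable]
    intro x hx
    have h1 := hρ t ht {x} (measurableSet_singleton x)
    simp only [image_singleton] at h1
    have h2 : ∫⁻ ω, ρ {S.φ t ω x} ∂S.P = ∫⁻ ω, c ∂S.P := by
      rw [← h1]; simp only [lintegral_const, measure_univ, mul_one]
      exact le_antisymm (hmax' x) hx
    have h3 := ae_eq_of_ae_le_of_lintegral_le (μ := S.P) (f := fun ω => ρ {S.φ t ω x})
      (g := fun _ => c) (Eventually.of_forall fun ω => hmax' _)
      (by rw [h2]; simp [measure_ne_top]; exact measure_ne_top _ _) aemeasurable_const h2.ge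
    filter_upwards [h3] with ω hω
    exact hω.ge
  have hinv : S.ForwardInvariant Bᶜ := by
    filter_upwards [ae_grid hinvt] with ω hω
    refine hq.closed_invariant hBfin.isClosed fun t ht => ?_
    rintro _ ⟨x, hx, rfl⟩ hy
    have hbij : S.φ t ω '' B = B := by
      apply Set.eq_of_subset_of_ncard_le _ _ hBfin
      · rintro _ ⟨y, hy, rfl⟩; exact hω t ht y hy
      · rw [Set.ncard_image_of_injective _ (S.φ t ω).injective]
    rw [← hbij] at hy
    obtain ⟨w, hw, hwx⟩ := hy
    exact hx ((S.φ t ω).injective hwx ▸ hw)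
  rcases hRM _ hBfin.isClosed.isOpen_compl hinv with h | h
  · rw [compl_empty_iff] at h
    exact infinite_circle (h ▸ hBfin)
  · rw [compl_univ_iff] at h
    exact hBne.ne_empty h

lemma GridStat.arcMass_eq {q : ℕ → ℕ} (hq : S.IsGrid q) {ρ : Measure UnitAddCircle}
    [IsProbabilityMeasure ρ] (hρ : S.GridStat q ρ) {t : ℝ} (ht : t ∈ gridSet q)
    (z : UnitAddCircle × UnitAddCircle) :
    ∫⁻ ω, arcMass ρ (S.two t ω z) ∂S.P = arcMass ρ z := by
  rw [arcMass, hρ t ht _ (measurableSet_arc _ _)]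
  refine lintegral_congr fun ω => ?_
  rw [(S.φ_orient t (hq.mem_T ht) ω).image_arc]
  rfl

lemma GridStat.minMass_le {q : ℕ → ℕ} (hq : S.IsGrid q) {ρ : Measure UnitAddCircle}
    [IsProbabilityMeasure ρ] (hρ : S.GridStat q ρ) {t : ℝ} (ht : t ∈ gridSet q)
    (z : UnitAddCircle × UnitAddCircle) :
    ∫⁻ ω, minMass ρ (S.two t ω z) ∂S.P ≤ minMass ρ z := by
  rw [minMass]
  apply le_min
  · rw [← hρ.arcMass_eq hq ht z]
    exact lintegral_mono fun ω => min_le_left _ _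
  · rw [← hρ.arcMass_eq hq ht z.swap]
    exact lintegral_mono fun ω => min_le_right _ _

end RDS

namespace RDS

variable {Ω : Type} [m : MeasurableSpace Ω] {S : RDS Ω}

lemma continuous_average (S : RDS Ω) {t : ℝ} (ht : t ∈ S.T)
    {f : UnitAddCircle × UnitAddCircle → ℝ≥0∞} (hf : Continuous f) (hf1 : ∀ z, f z ≤ 1) :
    Continuous (fun z => ∫⁻ ω, f (S.two t ω z) ∂S.P) := by
  rw [continuous_iff_continuousAt]
  intro x
  apply tendsto_lintegral_filter_of_dominated_convergence (fun _ => (1 : ℝ≥0∞))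
  · exact Eventually.of_forall fun y => hf.measurable.comp (S.measurable_two_left' ht y)
  · exact Eventually.of_forall fun y => Eventually.of_forall fun ω => hf1 _
  · simp
  · refine Eventually.of_forall fun ω => ?_
    have h1 : Continuous (fun y => f (S.two t ω y)) := by
      apply hf.comp
      unfold two
      fun_prop
    exact h1.continuousAt

/-- `f` is excessive along the grid -/
def Exc (S : RDS Ω) (q : ℕ → ℕ) (f : UnitAddCircle × UnitAddCircle → ℝ≥0∞) : Prop :=
  ∀ t ∈ gridSet q, ∀ z, ∫⁻ ω, f (S.two t ω z) ∂S.P ≤ f z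

lemma Exc.mono {q : ℕ → ℕ} (hq : S.IsGrid q) {f : UnitAddCircle × UnitAddCircle → ℝ≥0∞}
    (hf : Measurable f) (he : S.Exc q f) {s u : ℝ} (hs : s ∈ gridSet q) (hu : u ∈ gridSet q)
    (z : UnitAddCircle × UnitAddCircle) :
    ∫⁻ ω, f (S.two (s + u) ω z) ∂S.P ≤ ∫⁻ ω, f (S.two s ω z) ∂S.P := by
  rw [S.markov_two (hq.mem_T hs) (hq.mem_T hu) hf]
  exact lintegral_mono fun ω => he u hu _

lemma exists_later {q : ℕ → ℕ} (hq : S.IsGrid q) {t : ℝ} (ht : t ∈ gridSet q) :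
    ∃ j : ℕ, ∃ u ∈ gridSet q, (j : ℝ) = t + u := by
  obtain ⟨N, j, rfl⟩ := ht
  refine ⟨j, ((j * q N - j : ℕ) : ℝ) / q N, ⟨N, _, rfl⟩, ?_⟩
  have h1 : (q N : ℝ) ≠ 0 := by exact_mod_cast (hq.pos N).ne'
  rw [Nat.cast_sub (Nat.le_mul_of_pos_right _ (hq.pos N))]
  push_cast
  field_simp
  ring

/-- the expected smaller mass tends to zero -/
lemma minMass_vanish {q : ℕ → ℕ} (hq : S.IsGrid q) {ρ : Measure UnitAddCircle}
    [IsProbabilityMeasure ρ] (hat : Atomless ρ)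
    (he : S.Exc q (minMass ρ)) (hC : S.Contractible) (z : UnitAddCircle × UnitAddCircle) :
    ⨅ k : ℕ, ∫⁻ ω, minMass ρ (S.two (k : ℝ) ω z) ∂S.P = 0 := by
  set Nk : ℕ → UnitAddCircle × UnitAddCircle → ℝ≥0∞ := fun k z =>
    ∫⁻ ω, minMass ρ (S.two (k : ℝ) ω z) ∂S.P with hNk
  have hcm := continuous_minMass hat
  have hcont : ∀ k, Continuous (Nk k) := fun k =>
    S.continuous_average (hq.mem_T (hq.natCast k)) hcm (minMass_le_one ρ)
  have hanti : Antitone Nk := by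
    apply antitone_nat_of_succ_le
    intro k z
    have := he.mono hq hcm.measurable (hq.natCast k) (hq.natCast 1) z
    simpa [hNk] using this
  have husc : UpperSemicontinuous (fun z => ⨅ k, Nk k z) :=
    upperSemicontinuous_iInf fun k => (hcont k).upperSemicontinuous
  obtain ⟨z₀, -, hz₀⟩ := (husc.upperSemicontinuousOn univ).exists_isMaxOn ⟨z, mem_univ _⟩
    isCompact_univ
  have hle : ∀ w, ⨅ k, Nk k w ≤ ⨅ k, Nk k z₀ := fun w => hz₀ (mem_univ w)
  set c := ⨅ k, Nk k z₀ with hc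
  by_contra hne
  have hcpos : 0 < c := (pos_iff_ne_zero.2 hne).trans_le (hle z)
  have hctop : c ≠ ⊤ := by
    apply ne_top_of_le_ne_top one_ne_top
    refine (iInf_le _ 0).trans ?_
    calc _ ≤ ∫⁻ ω, 1 ∂S.P := lintegral_mono fun ω => minMass_le_one ρ _
      _ = 1 := by simp
  set Z : Set (UnitAddCircle × UnitAddCircle) := {w | c ≤ ⨅ k, Nk k w} with hZ
  have hZc : IsClosed Z := by
    have : Z = ⋂ k, {w | c ≤ Nk k w} := by
      ext w; simp [hZ, le_iInf_iff]
    rw [this]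
    exact isClosed_iInter fun k => isClosed_le continuous_const (hcont k)
  obtain ⟨w, hw, hmin⟩ := hZc.isCompact.exists_isMinOn ⟨z₀, le_refl c⟩
    (continuous_dist.continuousOn (s := Z))
  have hwne : w.1 ≠ w.2 := by
    intro heq
    have h1 : c ≤ Nk 0 w := le_trans hw (iInf_le _ 0)
    have h2 : w = (w.1, w.1) := by rw [Prod.ext_iff]; exact ⟨rfl, heq.symm⟩
    simp only [hNk, Nat.cast_zero, S.two_zero] at h1
    rw [h2, minMass_self] at h1
    simp at h1
    exact hcpos.ne' h1
  have hstay : ∀ t ∈ gridSet q, ∀ᵐ ω ∂S.P, S.two t ω w ∈ Z := by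
    intro t ht
    have htT := hq.mem_T ht
    have hm : ∀ k, Measurable (fun ω => Nk k (S.two t ω w)) := fun k =>
      (hcont k).measurable.comp (S.measurable_two_left' htT w)
    have h1 : c ≤ ∫⁻ ω, ⨅ k, Nk k (S.two t ω w) ∂S.P := by
      rw [lintegral_iInf hm (fun a b hab ω => hanti hab _)]
      · refine le_iInf fun k => ?_
        have h2 := S.markov_two htT (hq.mem_T (hq.natCast k)) hcm.measurable w
        simp only [hNk]
        rw [← h2]
        obtain ⟨j, u, hu, hj⟩ := exists_later hq (hq.add ht (hq.natCast k))
        have h3 := he.mono hq hcm.measurable (hq.add ht (hq.natCast k)) hu w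
        rw [← hj] at h3
        exact (le_trans hw (iInf_le _ j)).trans h3
      · apply ne_top_of_le_ne_top one_ne_top
        calc _ ≤ ∫⁻ ω, ∫⁻ ω', 1 ∂S.P ∂S.P := lintegral_mono fun ω =>
                lintegral_mono fun ω' => minMass_le_one ρ _
          _ = 1 := by simp
    have h3 := ae_eq_of_ae_le_of_lintegral_le (μ := S.P)
      (f := fun ω => ⨅ k, Nk k (S.two t ω w))
      (g := fun _ => c) (Eventually.of_forall fun ω => hle _)
      (ne_top_of_le_ne_top hctop (by
        calc _ ≤ ∫⁻ ω, c ∂S.P := lintegral_mono fun ω => hle _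
          _ = c := by simp)) aemeasurable_const (by simpa using h1)
    filter_upwards [h3] with ω hω
    exact hω.ge
  have hdist : ∀ᵐ ω ∂S.P, ∀ t ∈ S.T, ¬ dist (S.φ t ω w.1) (S.φ t ω w.2) < dist w.1 w.2 := by
    filter_upwards [ae_grid hstay] with ω hω t ht
    have := hq.closed_prop (ω := ω) (z := w) (g := fun z => - dist z.1 z.2) (s := 0)
      (c := - dist w.1 w.2) (fun t _ => by
        exact (continuous_dist.neg).continuousAt)
      (fun t ht _ => neg_le_neg (hmin (hω t ht))) t ht (S.nonneg_of_mem ht)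
    simp only [two] at this
    linarith
  have h0 := hC w.1 w.2 hwne
  have : S.P {ω | ∃ t ∈ S.T, dist (S.φ t ω w.1) (S.φ t ω w.2) < dist w.1 w.2} = 0 := by
    rw [ae_iff] at hdist
    convert hdist using 3
    ext ω
    simp
  exact h0.ne' this

/-- Maximal inequality, one step size, finitely many steps. -/
lemma maximal_step (S : RDS Ω) {h : ℝ} (hh : ∀ i : ℕ, (i : ℝ) * h ∈ S.T)
    {f : UnitAddCircle × UnitAddCircle → ℝ≥0∞} (hf : Measurable f)
    (he : ∀ z, ∫⁻ ω, f (S.two h ω z) ∂S.P ≤ f z) (c : ℝ≥0∞) (k : ℕ) :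
    ∀ z, c * S.P {ω | ∃ i ≤ k, c ≤ f (S.two ((i : ℕ) * h) ω z)} ≤ f z := by
  induction k with
  | zero =>
    intro z
    by_cases hz : c ≤ f z
    · calc _ ≤ c * 1 := by gcongr; exact prob_le_one
        _ ≤ f z := by simpa using hz
    · have : {ω | ∃ i ≤ 0, c ≤ f (S.two ((i : ℕ) * h) ω z)} = (∅ : Set Ω) := by
        ext ω; simp [S.two_zero, not_le.1 hz]
      rw [this]; simp
  | succ k ih =>
    intro z
    by_cases hz : c ≤ f z
    · calc _ ≤ c * 1 := by gcongr; exact prob_le_one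
        _ ≤ f z := by simpa using hz
    · have hhT : h ∈ S.T := by simpa using hh 1
      set B : Set ((UnitAddCircle × UnitAddCircle) × Ω) :=
        {p | ∃ i ≤ k, c ≤ f (S.two ((i : ℕ) * h) p.2 p.1)} with hBdef
      have hB : MeasurableSet[@Prod.instMeasurableSpace _ _ _ S.Fplus] B := by
        have : B = ⋃ i ∈ Finset.range (k + 1), {p | c ≤ f (S.two ((i : ℕ) * h) p.2 p.1)} := by
          ext p; simp [hBdef, Nat.lt_succ_iff]
        rw [this]
        refine @Finset.measurableSet_biUnion _ _ (@Prod.instMeasurableSpace _ _ _ S.Fplus) _ _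
          fun i _ => ?_
        exact (hf.comp (S.measurable_two_Fplus (hh i))) measurableSet_Ici
      have hev := S.markov_event hhT hB z
      have heq : {ω | ∃ i ≤ k + 1, c ≤ f (S.two ((i : ℕ) * h) ω z)} =
          {ω | (S.two h ω z, S.θ h ω) ∈ B} := by
        ext ω
        simp only [hBdef, mem_ofPred_eq]
        constructor
        · rintro ⟨i, hi, hc⟩
          rcases i with _ | i
          · simp only [Nat.cast_zero, zero_mul, S.two_zero] at hc
            exact absurd hc hz
          · refine ⟨i, by omega, ?_⟩
            rw [← S.two_add hhT (hh i)]
            convert hc using 3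
            push_cast; ring
        · rintro ⟨i, hi, hc⟩
          refine ⟨i + 1, by omega, ?_⟩
          rw [← S.two_add hhT (hh i)] at hc
          convert hc using 3
          push_cast; ring
      rw [heq, hev]
      calc _ ≤ ∫⁻ ω, c * S.P {ω' | (S.two h ω z, ω') ∈ B} ∂S.P := by
            exact lintegral_const_mul_le _ _
        _ ≤ ∫⁻ ω, f (S.two h ω z) ∂S.P := lintegral_mono fun ω => ih _
        _ ≤ f z := he z

/-- Maximal inequality along the whole grid. -/
lemma maximal_grid {q : ℕ → ℕ} (hq : S.IsGrid q) {f : UnitAddCircle × UnitAddCircle → ℝ≥0∞}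
    (hf : Measurable f) (he : S.Exc q f) (c : ℝ≥0∞) (z : UnitAddCircle × UnitAddCircle) :
    c * S.P {ω | ∃ t ∈ gridSet q, c ≤ f (S.two t ω z)} ≤ f z := by
  set E : ℕ → ℕ → Set Ω := fun N k => {ω | ∃ i ≤ k, c ≤ f (S.two ((i : ℕ) * (1 / (q N : ℝ))) ω z)}
    with hE
  have hEle : ∀ N k, c * S.P (E N k) ≤ f z := by
    intro N k
    refine S.maximal_step (fun i => ?_) hf (fun z => ?_) c k z
    · have := hq.mem N i
      rwa [div_eq_mul_one_div] at this
    · exact he _ ⟨N, 1, by simp⟩ z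
  have hmono : Monotone (fun N => ⋃ k, E N k) := by
    intro N M hNM ω hω
    simp only [hE, mem_iUnion, mem_ofPred_eq] at hω ⊢
    obtain ⟨k, i, hi, h⟩ := hω
    obtain ⟨j, hj⟩ := hq.refine hNM i
    refine ⟨j, j, le_rfl, ?_⟩
    rw [← div_eq_mul_one_div, ← hj, div_eq_mul_one_div]
    exact h
  have hset : {ω | ∃ t ∈ gridSet q, c ≤ f (S.two t ω z)} = ⋃ N, ⋃ k, E N k := by
    ext ω
    simp only [hE, mem_iUnion, mem_ofPred_eq]
    constructor
    · rintro ⟨t, ⟨N, j, rfl⟩, h⟩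
      exact ⟨N, j, j, le_rfl, by rwa [← div_eq_mul_one_div]⟩
    · rintro ⟨N, k, i, hi, h⟩
      exact ⟨(i : ℝ) * (1 / (q N : ℝ)), ⟨N, i, by ring⟩, h⟩
  have hmk : ∀ N, Monotone (E N) := by
    intro N a b hab ω hω
    obtain ⟨i, hi, h⟩ := hω
    exact ⟨i, hi.trans hab, h⟩
  rw [hset, hmono.measure_iUnion, ENNReal.mul_iSup]
  refine iSup_le fun N => ?_
  rw [(hmk N).measure_iUnion, ENNReal.mul_iSup]
  exact iSup_le fun k => hEle N k

/-- Maximal inequality after time `s`. -/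
lemma maximal_shift {q : ℕ → ℕ} (hq : S.IsGrid q) {f : UnitAddCircle × UnitAddCircle → ℝ≥0∞}
    (hf : Measurable f) (he : S.Exc q f) (c : ℝ≥0∞) (z : UnitAddCircle × UnitAddCircle)
    {s : ℝ} (hs : s ∈ gridSet q) :
    c * S.P {ω | ∃ t ∈ gridSet q, c ≤ f (S.two (s + t) ω z)} ≤ ∫⁻ ω, f (S.two s ω z) ∂S.P := by
  have hsT := hq.mem_T hs
  set B : Set ((UnitAddCircle × UnitAddCircle) × Ω) :=
    {p | ∃ t ∈ gridSet q, c ≤ f (S.two t p.2 p.1)} with hBdef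
  have hB : MeasurableSet[@Prod.instMeasurableSpace _ _ _ S.Fplus] B := by
    have : B = ⋃ t ∈ gridSet q, {p | c ≤ f (S.two t p.2 p.1)} := by
      ext p; simp [hBdef]
    rw [this]
    refine @MeasurableSet.biUnion _ _ (@Prod.instMeasurableSpace _ _ _ S.Fplus) _ _
      (countable_gridSet q) fun t ht => ?_
    exact (hf.comp (S.measurable_two_Fplus (hq.mem_T ht))) measurableSet_Ici
  have hev := S.markov_event hsT hB z
  have heq : {ω | ∃ t ∈ gridSet q, c ≤ f (S.two (s + t) ω z)} =
      {ω | (S.two s ω z, S.θ s ω) ∈ B} := by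
    ext ω
    simp only [hBdef, mem_ofPred_eq]
    refine exists_congr fun t => and_congr_right fun ht => ?_
    rw [S.two_add hsT (hq.mem_T ht)]
  rw [heq, hev]
  calc _ ≤ ∫⁻ ω, c * S.P {ω' | (S.two s ω z, ω') ∈ B} ∂S.P := lintegral_const_mul_le _ _
    _ ≤ ∫⁻ ω, f (S.two s ω z) ∂S.P := lintegral_mono fun ω => maximal_grid hq hf he c _

end RDS

namespace RDS

variable {Ω : Type} [m : MeasurableSpace Ω] {S : RDS Ω}

lemma sub_mem_grid {q : ℕ → ℕ} (hq : S.IsGrid q) {t : ℝ} (ht : t ∈ gridSet q) {k : ℕ}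
    (hk : (k : ℝ) ≤ t) : ∃ u ∈ gridSet q, t = k + u := by
  obtain ⟨N, j, rfl⟩ := ht
  have h0 : (0 : ℝ) < q N := by exact_mod_cast hq.pos N
  have h1 : k * q N ≤ j := by
    rw [le_div_iff₀ h0] at hk
    exact_mod_cast hk
  refine ⟨((j - k * q N : ℕ) : ℝ) / q N, ⟨N, _, rfl⟩, ?_⟩
  rw [Nat.cast_sub h1]
  push_cast
  field_simp
  ring

lemma measure_eq_one_of_ae {p : Ω → Prop} (h : ∀ᵐ ω ∂S.P, p ω) : S.P {ω | p ω} = 1 := by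
  have h1 : {ω | p ω} =ᵐ[S.P] univ := by
    rw [eventuallyEq_univ]; exact h
  rw [measure_congr h1, measure_univ]

lemma ae_minMass_small {q : ℕ → ℕ} (hq : S.IsGrid q) {ρ : Measure UnitAddCircle}
    [IsProbabilityMeasure ρ] (hat : Atomless ρ)
    (he : S.Exc q (minMass ρ)) (hC : S.Contractible) (z : UnitAddCircle × UnitAddCircle) :
    ∀ᵐ ω ∂S.P, ∀ δ : ℝ≥0∞, 0 < δ → ∃ k : ℕ, ∀ t ∈ gridSet q, (k : ℝ) ≤ t →
      minMass ρ (S.two t ω z) < δ := by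
  have hm := (continuous_minMass hat).measurable
  have key : ∀ᵐ ω ∂S.P, ∀ n : ℕ, ∃ k : ℕ, ∀ t ∈ gridSet q, (k : ℝ) ≤ t →
      minMass ρ (S.two t ω z) < (n : ℝ≥0∞)⁻¹ := by
    rw [ae_all_iff]
    intro n
    rw [ae_iff]
    set b := S.P {ω | ¬ ∃ k : ℕ, ∀ t ∈ gridSet q, (k : ℝ) ≤ t →
      minMass ρ (S.two t ω z) < (n : ℝ≥0∞)⁻¹} with hb
    have h1 : (n : ℝ≥0∞)⁻¹ * b ≤ 0 := by
      rw [← minMass_vanish hq hat he hC z]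
      refine le_iInf fun k => ?_
      refine le_trans ?_ (maximal_shift hq hm he (n : ℝ≥0∞)⁻¹ z (hq.natCast k))
      gcongr
      rw [hb]
      apply measure_mono
      intro ω hω
      simp only [mem_ofPred_eq, not_exists, not_forall, not_lt] at hω
      obtain ⟨t, ht, hkt, h⟩ := hω k
      obtain ⟨u, hu, rfl⟩ := sub_mem_grid hq ht hkt
      exact ⟨u, hu, h⟩
    rcases mul_eq_zero.1 (le_antisymm h1 bot_le) with h2 | h2
    · simp at h2
    · exact h2
  filter_upwards [key] with ω hω δ hδ
  obtain ⟨n, hn⟩ := ENNReal.exists_inv_nat_lt hδ.ne'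
  obtain ⟨k, hk⟩ := hω n
  exact ⟨k, fun t ht hkt => (hk t ht hkt).trans hn⟩

lemma exists_good (S : RDS Ω) (hRM : S.ReverseMinimal) : ∃ q, S.IsGrid q ∧
    ∃ ρ : Measure UnitAddCircle, IsProbabilityMeasure ρ ∧ Atomless ρ ∧ FullSupport ρ ∧
      S.GridStat q ρ := by
  obtain ⟨q, hq⟩ := S.exists_grid
  obtain ⟨ρ, hp, hρ⟩ := exists_stationary hq
  exact ⟨q, hq, ρ, hp, GridStat.atomless hq hρ hRM, GridStat.fullSupport hq hρ hRM, hρ⟩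

lemma synchronising_of (S : RDS Ω) (hC : S.Contractible) (hRM : S.ReverseMinimal) :
    S.Synchronising := by
  obtain ⟨q, hq, ρ, hp, hat, hfs, hρ⟩ := S.exists_good hRM
  intro x y
  apply measure_eq_one_of_ae
  filter_upwards [ae_minMass_small hq hat (fun t ht z => hρ.minMass_le hq ht z) hC (x, y)] with ω hω
  rw [Metric.tendsto_nhds]
  intro ε hε
  obtain ⟨δ, hδ, hlow⟩ := exists_minMass_lower hfs (half_pos hε)
  obtain ⟨k, hk⟩ := hω δ hδ
  have h1 := hq.closed_prop (ω := ω) (z := (x, y)) (g := fun z => dist z.1 z.2) (s := k)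
    (c := ε / 2) (fun t _ => continuous_dist.continuousAt)
    (fun t ht hkt => (hlow _ (hk t ht hkt)).le)
  rw [tFilter, eventually_inf_principal]
  filter_upwards [eventually_ge_atTop (k : ℝ)] with t hkt ht
  have h2 := h1 t ht hkt
  simp only [two] at h2
  rw [Real.dist_0_eq_abs, abs_of_nonneg dist_nonneg]
  linarith

lemma compressible_of (S : RDS Ω) (hC : S.Contractible) (hRM : S.ReverseMinimal) :
    S.Compressible := by
  obtain ⟨q, hq, ρ, hp, hat, hfs, hρ⟩ := S.exists_good hRM
  intro x y hxy
  by_contra hzero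
  have h0 : S.P {ω | ∃ t ∈ S.T, dPlus (S.φ t ω x) (S.φ t ω y) < dPlus x y} = 0 := by
    simpa using hzero
  have hae : ∀ᵐ ω ∂S.P, ∀ t ∈ S.T, dPlus x y ≤ dPlus (S.φ t ω x) (S.φ t ω y) := by
    rw [ae_iff]
    convert h0 using 3
    ext ω
    simp
  obtain ⟨δ, hδ, hbig⟩ := exists_big_arc hfs (dPlus_pos hxy)
  have hpos : 0 < arcMass ρ (y, x) := by
    obtain ⟨c, hc⟩ := exists_ball_eq_arc y x
    refine hfs _ (isOpen_arc y x) ?_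
    rw [hc]
    exact ⟨c, Metric.mem_ball_self (half_pos (dPlus_pos hxy.symm))⟩
  have hlow : ∀ k : ℕ, min δ 1 * arcMass ρ (y, x) ≤
      ∫⁻ ω, minMass ρ (S.two (k : ℝ) ω (x, y)) ∂S.P := by
    intro k
    have hkT := hq.mem_T (hq.natCast k)
    rw [← hρ.arcMass_eq hq (hq.natCast k) (y, x)]
    refine (lintegral_const_mul_le _ _).trans (lintegral_mono_ae ?_)
    filter_upwards [hae] with ω hω
    have h1 : arcMass ρ (S.two k ω (y, x)) ≤ 1 := prob_le_one
    apply le_min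
    · calc _ ≤ δ * 1 := by gcongr; exact min_le_left _ _
        _ ≤ _ := by rw [mul_one]; exact hbig _ _ (hω k hkT)
    · calc _ ≤ 1 * arcMass ρ (S.two k ω (y, x)) := by gcongr; exact min_le_right _ _
        _ = _ := by rw [one_mul]; rfl
  have h2 := le_iInf hlow
  rw [minMass_vanish hq hat (fun t ht z => hρ.minMass_le hq ht z) hC (x, y)] at h2
  have h3 : 0 < min δ 1 * arcMass ρ (y, x) :=
    ENNReal.mul_pos (lt_min hδ one_pos).ne' hpos.ne'
  exact absurd h2 (not_le.2 h3)

lemma no_fixed_of (S : RDS Ω) (hRM : S.ReverseMinimal) (p : UnitAddCircle) :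
    ¬ S.DetFixedPoint p := by
  intro hp
  have hinv : S.ForwardInvariant {p}ᶜ := by
    filter_upwards [hp] with ω hω t ht
    rintro _ ⟨x, hx, rfl⟩ h
    rw [mem_singleton_iff, ← hω t ht] at h
    have h' := (S.φ t ω).injective h
    exact hx h'
  rcases hRM _ isClosed_singleton.isOpen_compl hinv with h | h
  · rw [compl_empty_iff] at h
    exact infinite_circle (h ▸ finite_singleton p)
  · rw [compl_univ_iff] at h
    exact (singleton_ne_empty p) h

lemma volume_tendsto {q : ℕ → ℕ} (hq : S.IsGrid q) {ρ : Measure UnitAddCircle}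
    [IsProbabilityMeasure ρ] (hat : Atomless ρ) (hfs : FullSupport ρ) {a b : UnitAddCircle}
    (hab : a ≠ b) {ω : Ω} (hω : ∀ δ : ℝ≥0∞, 0 < δ → ∃ k : ℕ, ∀ t ∈ gridSet q, (k : ℝ) ≤ t →
      minMass ρ (S.two t ω (a, b)) < δ)
    (hhalf : ∀ t ∈ gridSet q, arcMass ρ (S.two t ω (a, b)) < 2⁻¹) :
    Tendsto (fun t => volume (S.φ t ω '' arc a b)) S.tFilter (𝓝 0) := by
  rw [ENNReal.tendsto_nhds_zero]
  intro ε hε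
  obtain ⟨r, hr0, hr⟩ : ∃ r : ℝ, 0 < r ∧ ENNReal.ofReal r ≤ ε := by
    by_cases h : ε = ⊤
    · exact ⟨1, one_pos, by simp [h]⟩
    · exact ⟨ε.toReal, ENNReal.toReal_pos hε.ne' h, by rw [ENNReal.ofReal_toReal h]⟩
  obtain ⟨δ, hδ, hbig⟩ := exists_big_arc hfs hr0
  obtain ⟨k, hk⟩ := hω δ hδ
  have h1 := hq.closed_prop (ω := ω) (z := (a, b)) (g := fun z => dPlus z.1 z.2) (s := k)
    (c := r) (fun t _ => continuousAt_dPlus (fun h => hab ((S.φ t ω).injective h)))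
    (fun t ht hkt => by
      by_contra hc
      have h2 := hbig _ _ (not_le.1 hc).le
      have h3 := hk t ht hkt
      have hne : (S.two t ω (a, b)).1 ≠ (S.two t ω (a, b)).2 :=
        fun h => hab ((S.φ t ω).injective h)
      have h4 := one_le_arcMass_add hat hne
      have h5 := hhalf t ht
      rw [minMass, min_lt_iff] at h3
      rcases h3 with h3 | h3
      · exact absurd h2 (not_le.2 h3)
      · have h6 : arcMass ρ (S.two t ω (a, b)).swap < 2⁻¹ :=
          h3.trans_le (h2.trans h5.le)
        have h7 := ENNReal.add_lt_add h5 h6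
        rw [ENNReal.inv_two_add_inv_two] at h7
        exact absurd h4 (not_le.2 h7))
  rw [tFilter, eventually_inf_principal]
  filter_upwards [eventually_ge_atTop (k : ℝ)] with t hkt ht
  have h2 := h1 t ht hkt
  rw [(S.φ_orient t ht ω).image_arc]
  exact (volume_arc_le _ _).trans ((ENNReal.ofReal_le_ofReal h2).trans hr)

lemma locallyStable_of (S : RDS Ω) (hC : S.Contractible) (hRM : S.ReverseMinimal) :
    S.EverywhereLocallyStable := by
  obtain ⟨q, hq, ρ, hp, hat, hfs, hρ⟩ := S.exists_good hRM
  intro x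
  apply measure_eq_one_of_ae
  rw [ae_iff]
  set bad := S.P {ω | ¬ ∃ U : Set UnitAddCircle, IsOpen U ∧ x ∈ U ∧
    Tendsto (fun t => volume (⇑(S.φ t ω) '' U)) S.tFilter (𝓝 0)} with hbad
  have hle : ∀ δ : ℝ≥0∞, 0 < δ → 2⁻¹ * bad ≤ δ := by
    intro δ hδ
    obtain ⟨ε, hε, hsmall⟩ := exists_small_arc hat hδ
    obtain ⟨c, rfl⟩ := circleProj_surj x
    set r := min (ε / 2) (1 / 2) with hr
    have hr0 : 0 < r := lt_min (half_pos hε) (by norm_num)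
    have hr1 : r < 1 := (min_le_right _ _).trans_lt (by norm_num)
    have hrε : r < ε := (min_le_left _ _).trans_lt (half_lt_self hε)
    set a := circleProj (c - r / 2) with ha
    set b := circleProj (c - r / 2 + r) with hb
    have hd : dPlus a b = r := dPlus_coe _ hr0.le hr1
    have hab : a ≠ b := fun h => by
      rw [dPlus_eq_zero.2 h] at hd; exact hr0.ne hd
    have hx : circleProj c ∈ arc a b := by
      rw [ha, hb, ball_eq_arc hr0.le hr1]
      have : c - r / 2 + r / 2 = c := by ring
      rw [this]
      exact Metric.mem_ball_self (half_pos hr0)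
    have hmax := maximal_grid hq (measurable_arcMass ρ)
      (fun t ht z => (hρ.arcMass_eq hq ht z).le) 2⁻¹ (a, b)
    refine le_trans ?_ (hmax.trans (hsmall a b (hd ▸ hrε)).le)
    gcongr
    rw [hbad]
    apply measure_mono_ae
    filter_upwards [ae_minMass_small hq hat (fun t ht z => hρ.minMass_le hq ht z) hC (a, b)]
      with ω hω hωb
    by_contra hn
    apply hωb
    refine ⟨arc a b, isOpen_arc a b, hx, volume_tendsto hq hat hfs hab hω fun t ht => ?_⟩
    by_contra hc
    exact hn ⟨t, ht, not_lt.1 hc⟩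
  have h0 : 2⁻¹ * bad = 0 := by
    by_contra h
    obtain ⟨d, hd0, hd⟩ := exists_between (pos_iff_ne_zero.2 h)
    exact absurd (hle d hd0) (not_le.2 hd)
  rcases mul_eq_zero.1 h0 with h | h
  · simp at h
  · exact h

/-! ### the forward direction -/

lemma contractible_of (S : RDS Ω) (hC : S.Compressible) : S.Contractible := by
  have key : ∀ x y : UnitAddCircle, x ≠ y → dist x y = dPlus x y →
      0 < S.P {ω | ∃ t ∈ S.T, dist (S.φ t ω x) (S.φ t ω y) < dist x y} := by
    intro x y hxy hd
    refine (hC x y hxy).trans_le (measure_mono ?_)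
    rintro ω ⟨t, ht, h⟩
    exact ⟨t, ht, by rw [hd]; exact (dist_le_dPlus _ _).trans_lt h⟩
  intro x y hxy
  rcases le_total (dPlus x y) (1 - dPlus x y) with h | h
  · exact key x y hxy (by rw [dist_eq_min, min_eq_left h])
  · have := key y x hxy.symm (by
      rw [dist_comm, dist_eq_min, min_eq_right h, dPlus_swap hxy])
    simpa only [dist_comm] using this

lemma reverseMinimal_of (S : RDS Ω) (hC : S.Compressible) (hF : ∀ p, ¬ S.DetFixedPoint p) :
    S.ReverseMinimal := by
  intro A hA hinv
  by_contra hne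
  push Not at hne
  obtain ⟨hA0, hA1⟩ := hne
  set K := Aᶜ with hK
  have hKc : IsClosed K := hA.isClosed_compl
  have hKne : K.Nonempty := nonempty_compl.2 hA1
  obtain ⟨x₀, hx₀⟩ := hA0
  obtain ⟨c, -, hc⟩ := isCompact_univ.exists_isMaxOn ⟨x₀, mem_univ _⟩
    ((Metric.continuous_infDist_pt K).continuousOn (s := univ))
  have hmax : ∀ u, Metric.infDist u K ≤ Metric.infDist c K := fun u => hc (mem_univ u)
  set r := Metric.infDist c K with hr
  have hr0 : 0 < r := by
    refine lt_of_lt_of_le ?_ (hmax x₀)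
    rw [← hKc.notMem_iff_infDist_pos hKne]
    exact fun h => h hx₀
  have hball : Metric.ball c r ⊆ A := by
    intro u hu
    by_contra hn
    have := Metric.infDist_le_dist_of_mem (x := c) (show u ∈ K from hn)
    rw [Metric.mem_ball, dist_comm] at hu
    linarith
  have hdist : ∀ u : UnitAddCircle, dist c u ≤ 1 / 2 := by
    intro u
    rw [dist_eq_min]
    rcases le_total (dPlus c u) (1 / 2) with h | h
    · exact (min_le_left _ _).trans h
    · exact (min_le_right _ _).trans (by linarith)
  obtain ⟨c', hc'⟩ := circleProj_surj c
  obtain ⟨p, hp⟩ := hKne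
  have hrp : ∀ p ∈ K, r ≤ dist c p := fun p hp => Metric.infDist_le_dist_of_mem hp
  rcases lt_or_ge r (1 / 2) with hlt | hge
  · set x := circleProj (c' - r) with hx
    set y := circleProj (c' - r + 2 * r) with hy
    have hd : dPlus x y = 2 * r := dPlus_coe _ (by linarith) (by linarith)
    have hxy : x ≠ y := fun h => by
      rw [dPlus_eq_zero.2 h] at hd; linarith
    have harc : arc x y ⊆ A := by
      rw [hx, hy, ball_eq_arc (by linarith) (by linarith)]
      have h1 : c' - r + 2 * r / 2 = c' := by ring
      have h2 : 2 * r / 2 = r := by ring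
      rw [h1, h2, hc']
      exact hball
    have hae : S.P {ω | ∃ t ∈ S.T, dPlus (S.φ t ω y) (S.φ t ω x) < dPlus y x} = 0 := by
      have : ∀ᵐ ω ∂S.P, ¬ ∃ t ∈ S.T, dPlus (S.φ t ω y) (S.φ t ω x) < dPlus y x := by
        filter_upwards [hinv] with ω hω
        rintro ⟨t, ht, h⟩
        have hne : S.φ t ω x ≠ S.φ t ω y := fun h => hxy ((S.φ t ω).injective h)
        rw [dPlus_swap hxy, dPlus_swap hne, hd] at h
        have h1 : arc (S.φ t ω x) (S.φ t ω y) ⊆ A := by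
          rw [← (S.φ_orient t ht ω).image_arc]
          exact (image_mono harc).trans (hω t ht)
        obtain ⟨d, hd'⟩ := exists_ball_eq_arc (S.φ t ω x) (S.φ t ω y)
        rw [hd'] at h1
        have h2 : dPlus (S.φ t ω x) (S.φ t ω y) / 2 ≤ Metric.infDist d K := by
          rw [Metric.le_infDist ⟨p, hp⟩]
          intro u hu
          by_contra hlt'
          exact hu (h1 (by rw [Metric.mem_ball, dist_comm]; exact not_le.1 hlt'))
        have h3 := hmax d
        linarith
      rw [ae_iff] at this
      simpa only [not_not] using this
    exact (hC y x hxy.symm).ne' hae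
  · have huniq : ∀ u ∈ K, u = circleProj (c' + 1 / 2) := by
      intro u hu
      have h1 : dist c u = 1 / 2 := le_antisymm (hdist u) (hge.trans (hrp u hu))
      rw [dist_eq_min] at h1
      have h2 : dPlus c u = 1 / 2 := by
        have ha := min_le_left (dPlus c u) (1 - dPlus c u)
        have hb := min_le_right (dPlus c u) (1 - dPlus c u)
        linarith
      rw [dPlus_spec c' u, hc', h2]
    apply hF p
    filter_upwards [hinv] with ω hω t ht
    have h1 : (S.φ t ω).symm p ∈ K := by
      intro hn
      have := hω t ht ⟨_, hn, rfl⟩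
      rw [Homeomorph.apply_symm_apply] at this
      exact hp this
    have h2 : (S.φ t ω).symm p = p := (huniq _ h1).trans (huniq p hp).symm
    conv_lhs => rw [← h2]
    simp

end RDS

/-- `φ` compressible with no deterministic fixed points iff `φ` contractible with
reverse-minimal dynamics; and in these cases `φ` is stably synchronising. -/
theorem compressible_iff_contractible_reverseMinimal_and_stablySynchronising
    {Ω : Type} [MeasurableSpace Ω] (S : RDS Ω) :
    ((S.Compressible ∧ ∀ p : UnitAddCircle, ¬ S.DetFixedPoint p) ↔
      (S.Contractible ∧ S.ReverseMinimal)) ∧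
    ((S.Compressible ∧ ∀ p : UnitAddCircle, ¬ S.DetFixedPoint p) →
      S.StablySynchronising) := by
  have forward : (S.Compressible ∧ ∀ p : UnitAddCircle, ¬ S.DetFixedPoint p) →
      (S.Contractible ∧ S.ReverseMinimal) := fun h =>
    ⟨S.contractible_of h.1, S.reverseMinimal_of h.1 h.2⟩
  refine ⟨⟨forward, fun h => ⟨S.compressible_of h.1 h.2, S.no_fixed_of h.2⟩⟩, fun h => ?_⟩
  obtain ⟨h1, h2⟩ := forward h
  exact ⟨S.synchronising_of h1 h2, S.locallyStable_of h1 h2⟩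
end
end

section
/- Suppose the invertible RDS φ on 𝕊¹ is compressible. Then for any x,y∈𝕊¹ and any ε>0 there exists t∈𝕋⁺ such that ℙ(ω : d₊(φ(t,ω)x,φ(t,ω)y)<ε)>0. -/
open MeasureTheory Filter Topology Set ENNReal

noncomputable section

lemma dPlus_eq (x y : UnitAddCircle) :
    dPlus x y = (AddCircle.equivIco 1 0 (y - x) : ℝ) := by
  have hz : (((AddCircle.equivIco 1 0 (y - x) : ℝ)) : UnitAddCircle) = y - x :=
    (AddCircle.equivIco 1 0).symm_apply_apply (y - x)
  have hm := (AddCircle.equivIco 1 0 (y - x)).2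
  set c : ℝ := (AddCircle.equivIco 1 0 (y - x) : ℝ) with hc
  unfold dPlus
  apply IsLeast.csInf_eq
  constructor
  · refine ⟨hm.1, ?_⟩
    obtain ⟨x', rfl⟩ := QuotientAddGroup.mk_surjective x
    refine ⟨x', rfl, ?_⟩
    change ((x' + c : ℝ) : UnitAddCircle) = y
    rw [AddCircle.coe_add, hz]
    exact add_sub_cancel _ _
  · rintro r ⟨hr, x', rfl, rfl⟩
    by_contra hlt
    push Not at hlt
    apply hlt.ne
    have : ((r : ℝ) : UnitAddCircle) = (c : ℝ) := by
      rw [hz]; simp [circleProj]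
    have hr1 : r ∈ Ico (0 : ℝ) (0 + 1) := ⟨hr, hlt.trans hm.2⟩
    exact (AddCircle.coe_eq_coe_iff_of_mem_Ico hr1 hm).1 this

lemma dPlus_coe_s2 (x y : UnitAddCircle) : y = x + ((dPlus x y : ℝ) : UnitAddCircle) := by
  have hz : (((AddCircle.equivIco 1 0 (y - x) : ℝ)) : UnitAddCircle) = y - x :=
    (AddCircle.equivIco 1 0).symm_apply_apply (y - x)
  rw [dPlus_eq, hz]; abel

lemma dPlus_self (x : UnitAddCircle) : dPlus x x = 0 := by
  unfold dPlus
  apply IsLeast.csInf_eq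
  refine ⟨⟨le_rfl, ?_⟩, fun r hr => hr.1⟩
  obtain ⟨x', rfl⟩ := QuotientAddGroup.mk_surjective x
  exact ⟨x', rfl, by simp [circleProj]⟩

lemma dPlus_add (x : UnitAddCircle) (r : ℝ) (h0 : 0 ≤ r) (h1 : r < 1) :
    dPlus x (x + (r : UnitAddCircle)) = r := by
  have := dPlus_coe_s2 x (x + (r : UnitAddCircle))
  have h2 := add_left_cancel this
  exact ((AddCircle.coe_eq_coe_iff_of_mem_Ico (p := 1) (a := 0) ⟨h0, by simpa using h1⟩
    ⟨dPlus_nonneg _ _, by simpa using dPlus_lt_one _ _⟩).1 h2).symm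

lemma dPlus_continuousAt {p : UnitAddCircle × UnitAddCircle} (hp : p.1 ≠ p.2) :
    ContinuousAt (fun q : UnitAddCircle × UnitAddCircle => dPlus q.1 q.2) p := by
  simp_rw [dPlus_eq]
  have h1 : ContinuousAt (AddCircle.equivIco (1 : ℝ) 0) (p.2 - p.1) := by
    apply AddCircle.continuousAt_equivIco
    simpa [sub_eq_zero] using hp.symm
  have h2 : ContinuousAt (fun q : UnitAddCircle × UnitAddCircle => q.2 - q.1) p := by fun_prop
  exact continuous_subtype_val.continuousAt.comp
    (ContinuousAt.comp (f := fun q : UnitAddCircle × UnitAddCircle => q.2 - q.1) h1 h2)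

lemma dPlus_measurable :
    Measurable (fun q : UnitAddCircle × UnitAddCircle => dPlus q.1 q.2) := by
  simp_rw [dPlus_eq]
  have h1 : Measurable (AddCircle.equivIco (1 : ℝ) 0) := (AddCircle.measurableEquivIco 1 0).measurable
  exact measurable_subtype_coe.comp (h1.comp (measurable_snd.sub measurable_fst))

section aux
variable {Ω : Type} [m : MeasurableSpace Ω] (S : RDS Ω)

lemma RDS.zero_mem_s2 : (0 : ℝ) ∈ S.T := by
  rcases S.T_cases with h | h <;> rw [h]
  · exact ⟨0, by simp⟩
  · simp

lemma RDS.add_mem_s2 {s t : ℝ} (hs : s ∈ S.T) (ht : t ∈ S.T) : s + t ∈ S.T := by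
  rcases S.T_cases with h | h <;> rw [h] at hs ht ⊢
  · obtain ⟨a, rfl⟩ := hs
    obtain ⟨b, rfl⟩ := ht
    exact ⟨a + b, by simp⟩
  · exact add_nonneg (mem_Ici.1 hs) (mem_Ici.1 ht)

lemma RDS.pt_meas {t : ℝ} (ht : t ∈ S.T) (x : UnitAddCircle) :
    @Measurable Ω UnitAddCircle (S.F t) _ (fun ω => S.φ t ω x) := by
  have h := S.φ_meas t ht
  exact @Measurable.comp _ _ _ (S.F t) ((S.F t).prod inferInstance) _ _ _ h
    (@measurable_prodMk_right _ _ (S.F t) _ x)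

lemma RDS.pair_meas {t : ℝ} (ht : t ∈ S.T) (x y : UnitAddCircle) :
    @Measurable Ω (UnitAddCircle × UnitAddCircle) (S.F t) _
      (fun ω => (S.φ t ω x, S.φ t ω y)) := by
  exact Measurable.prodMk (S.pt_meas ht x) (S.pt_meas ht y)

/-- Reduction of the uncountable union of times to a single time. -/
lemma RDS.exists_time (u v : UnitAddCircle) (huv : u ≠ v) (r : ℝ)
    (h : 0 < S.P {ω | ∃ t ∈ S.T, dPlus (S.φ t ω u) (S.φ t ω v) < r}) :
    ∃ t ∈ S.T, 0 < S.P {ω | dPlus (S.φ t ω u) (S.φ t ω v) < r} := by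
  by_contra! hcon
  simp only [nonpos_iff_eq_zero] at hcon
  apply h.ne'
  rcases S.T_cases with hT | hT
  · have : {ω | ∃ t ∈ S.T, dPlus (S.φ t ω u) (S.φ t ω v) < r} ⊆
        ⋃ n : ℕ, {ω | dPlus (S.φ n ω u) (S.φ n ω v) < r} := by
      rintro ω ⟨t, ht, hlt⟩
      rw [hT] at ht
      obtain ⟨n, rfl⟩ := ht
      exact mem_iUnion.2 ⟨n, hlt⟩
    refine measure_mono_null this (measure_iUnion_null fun n => hcon _ ?_)
    rw [hT]; exact ⟨n, rfl⟩
  · have : {ω | ∃ t ∈ S.T, dPlus (S.φ t ω u) (S.φ t ω v) < r} ⊆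
        ⋃ q : {q : ℚ // 0 ≤ q}, {ω | dPlus (S.φ (q : ℚ) ω u) (S.φ (q : ℚ) ω v) < r} := by
      rintro ω ⟨t, ht, hlt⟩
      have ht0 : 0 ≤ t := by rw [hT] at ht; exact ht
      obtain ⟨q', hqa', hqt, hq'⟩ := Real.exists_seq_rat_strictAnti_tendsto t
      let q : ℕ → ℝ := fun n => (q' n : ℝ)
      have hqa : StrictAnti q := fun a b hab => Rat.cast_lt.2 (hqa' hab)
      have hq : Tendsto q atTop (𝓝 t) := hq'
      have hqT : ∀ n, q n ∈ S.T := fun n => by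
        rw [hT]; exact ht0.trans (hqt n).le
      have hu := S.φ_cadlag_right ω t ht q hqT hqa.antitone hq (fun _ => u) u tendsto_const_nhds
      have hv := S.φ_cadlag_right ω t ht q hqT hqa.antitone hq (fun _ => v) v tendsto_const_nhds
      have hne : (S.φ t ω u, S.φ t ω v).1 ≠ (S.φ t ω u, S.φ t ω v).2 := 
        fun e => huv ((S.φ t ω).injective e)
      have hc := (dPlus_continuousAt hne).tendsto.comp (hu.prodMk_nhds hv)
      obtain ⟨n, hn⟩ := (hc.eventually (gt_mem_nhds hlt)).exists
      have ha0 : 0 ≤ q' n := by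
        have : (0 : ℝ) ≤ q' n := ht0.trans (hqt n).le
        exact_mod_cast this
      exact mem_iUnion.2 ⟨⟨q' n, ha0⟩, hn⟩
    refine measure_mono_null this (measure_iUnion_null fun q => hcon _ ?_)
    rw [hT, mem_Ici]; exact_mod_cast q.2

/-- A measurable event of positive probability on which a whole ball of pairs is compressed. -/
lemma RDS.exists_ball (u v : UnitAddCircle) (huv : u ≠ v) (r : ℝ) (hr : 0 < r) {t : ℝ}
    (ht : t ∈ S.T) (h : 0 < S.P {ω | dPlus (S.φ t ω u) (S.φ t ω v) < r}) :
    ∃ δ > 0, ∃ A : Set Ω, MeasurableSet[S.F t] A ∧ 0 < S.P A ∧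
      ∀ ω ∈ A, ∀ p ∈ Metric.ball (u, v) δ, dPlus (S.φ t ω p.1) (S.φ t ω p.2) < r := by
  obtain ⟨D, hDc, hDd⟩ := TopologicalSpace.exists_countable_dense (UnitAddCircle × UnitAddCircle)
  let e : ℕ → ℝ := fun n => 1 / ((n : ℝ) + 1)
  have he : ∀ n, 0 < e n := fun n => Nat.one_div_pos_of_nat
  let A : ℕ × ℕ → Set Ω := fun nk => ⋂ p ∈ D ∩ Metric.ball (u, v) (e nk.1),
    {ω | dPlus (S.φ t ω p.1) (S.φ t ω p.2) ≤ r - e nk.2}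
  have hcont : ∀ ω, ∀ p : UnitAddCircle × UnitAddCircle, p.1 ≠ p.2 →
      ContinuousAt (fun p : UnitAddCircle × UnitAddCircle =>
        dPlus (S.φ t ω p.1) (S.φ t ω p.2)) p := by
    intro ω p hp
    have hne : (S.φ t ω p.1, S.φ t ω p.2).1 ≠ (S.φ t ω p.1, S.φ t ω p.2).2 := 
        fun e => hp ((S.φ t ω).injective e)
    have hg : ContinuousAt (fun p : UnitAddCircle × UnitAddCircle =>
      (S.φ t ω p.1, S.φ t ω p.2)) p := by fun_prop
    exact ContinuousAt.comp (f := fun p : UnitAddCircle × UnitAddCircle =>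
      (S.φ t ω p.1, S.φ t ω p.2)) (dPlus_continuousAt hne) hg
  have hsub : {ω | dPlus (S.φ t ω u) (S.φ t ω v) < r} ⊆ ⋃ nk, A nk := by
    intro ω hω
    simp only [mem_ofPred_eq] at hω
    obtain ⟨k, hk⟩ := exists_nat_one_div_lt (sub_pos.2 hω)
    have hlt : dPlus (S.φ t ω u) (S.φ t ω v) < r - e k := by simp only [e]; linarith
    have := (hcont ω (u, v) huv).tendsto.eventually (gt_mem_nhds hlt)
    obtain ⟨δ, hδ, hb⟩ := Metric.eventually_nhds_iff_ball.1 this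
    obtain ⟨n, hn⟩ := exists_nat_one_div_lt hδ
    refine mem_iUnion.2 ⟨(n, k), mem_iInter₂.2 fun p hp => ?_⟩
    exact (hb p (Metric.ball_subset_ball hn.le hp.2)).le
  have hpos : ∃ nk, 0 < S.P (A nk) := by
    by_contra! hcon
    exact h.ne' (measure_mono_null hsub (measure_iUnion_null fun nk => le_zero_iff.1 (hcon nk)))
  obtain ⟨⟨n, k⟩, hA⟩ := hpos
  refine ⟨e n, he n, A (n, k), ?_, hA, ?_⟩
  · refine @MeasurableSet.biInter _ _ (S.F t) _ _ (hDc.mono inter_subset_left) fun p _ => ?_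
    exact (dPlus_measurable.comp (S.pair_meas ht p.1 p.2)) measurableSet_Iic
  · intro ω hω p hp
    by_cases hpp : p.1 = p.2
    · rw [hpp, dPlus_self]; exact hr
    · have hcl : p ∈ closure (D ∩ Metric.ball (u, v) (e n)) := by
        rw [inter_comm]
        exact hDd.open_subset_closure_inter Metric.isOpen_ball hp
      haveI := mem_closure_iff_nhdsWithin_neBot.1 hcl
      have hl : dPlus (S.φ t ω p.1) (S.φ t ω p.2) ≤ r - e k := by
        refine le_of_tendsto ((hcont ω p hpp).continuousWithinAt
          (s := D ∩ Metric.ball (u, v) (e n))) ?_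
        filter_upwards [self_mem_nhdsWithin] with q hq
        exact mem_iInter₂.1 hω q hq
      linarith [he k]

/-- A limit pair with distance exactly `r` approached by the two-point motion. -/
lemma RDS.exists_limit (x y : UnitAddCircle) (r : ℝ) (h0 : 0 < r) (h1 : r < 1)
    (hlow : ∀ t ∈ S.T, S.P {ω | dPlus (S.φ t ω x) (S.φ t ω y) < r} = 0)
    (happ : ∀ δ > 0, ∃ t ∈ S.T, 0 < S.P {ω | dPlus (S.φ t ω x) (S.φ t ω y) < r + δ}) :
    ∃ u v : UnitAddCircle, dPlus u v = r ∧ ∀ δ > 0, ∃ s ∈ S.T,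
      0 < S.P {ω | (S.φ s ω x, S.φ s ω y) ∈ Metric.ball (u, v) δ} := by
  by_contra! hcon
  let C : Set (UnitAddCircle × UnitAddCircle) :=
    range fun u : UnitAddCircle => (u, u + (r : UnitAddCircle))
  have hC : IsCompact C := isCompact_range (by fun_prop)
  have hW : ∃ W : Set (UnitAddCircle × UnitAddCircle), IsOpen W ∧ C ⊆ W ∧
      ∀ s ∈ S.T, S.P {ω | (S.φ s ω x, S.φ s ω y) ∈ W} = 0 := by
    refine hC.induction_on (p := fun B => ∃ W : Set (UnitAddCircle × UnitAddCircle),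
      IsOpen W ∧ B ⊆ W ∧ ∀ s ∈ S.T, S.P {ω | (S.φ s ω x, S.φ s ω y) ∈ W} = 0) ?_ ?_ ?_ ?_
    · exact ⟨∅, isOpen_empty, subset_rfl, by simp⟩
    · rintro s t hst ⟨W, hW, htW, hz⟩
      exact ⟨W, hW, hst.trans htW, hz⟩
    · rintro s t ⟨W, hW, htW, hz⟩ ⟨W', hW', htW', hz'⟩
      refine ⟨W ∪ W', hW.union hW', union_subset_union htW htW', fun a ha => ?_⟩
      exact measure_union_null (hz a ha) (hz' a ha)
    · rintro _ ⟨u, rfl⟩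
      obtain ⟨δ, hδ, hs⟩ := hcon u _ (dPlus_add u r h0.le h1)
      refine ⟨_, mem_nhdsWithin_of_mem_nhds (Metric.ball_mem_nhds _ hδ), _,
        Metric.isOpen_ball, subset_rfl, fun s hs' => le_zero_iff.1 (hs s hs')⟩
  obtain ⟨W, hWo, hCW, hz⟩ := hW
  obtain ⟨δ, hδ, hth⟩ := hC.exists_thickening_subset_open hWo hCW
  obtain ⟨t, ht, hpos⟩ := happ δ hδ
  apply hpos.ne'
  refine measure_mono_null ?_ (measure_union_null (hlow t ht) (hz t ht))
  intro ω hω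
  by_cases hlt : dPlus (S.φ t ω x) (S.φ t ω y) < r
  · exact Or.inl hlt
  · refine Or.inr (hth ?_)
    simp only [mem_ofPred_eq] at hω
    rw [Metric.mem_thickening_iff]
    refine ⟨_, ⟨S.φ t ω x, rfl⟩, ?_⟩
    have hy := dPlus_coe_s2 (S.φ t ω x) (S.φ t ω y)
    set c := dPlus (S.φ t ω x) (S.φ t ω y)
    rw [Prod.dist_eq, hy]
    simp only [dist_self, dist_add_left]
    apply max_lt hδ
    rw [dist_eq_norm, ← AddCircle.coe_sub]
    refine (QuotientAddGroup.norm_mk_le_norm (m := c - r)).trans_lt ?_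
    rw [Real.norm_eq_abs, abs_of_nonneg (by linarith)]
    linarith

end aux

/-- if `φ` is compressible then for any `x y` and `ε > 0` there is a time `t` at
which the anticlockwise distance is less than `ε` with positive probability. -/
theorem compressible_dPlus_lt_eps_positive_probability
    {Ω : Type} [MeasurableSpace Ω] (S : RDS Ω) (h : S.Compressible)
    (x y : UnitAddCircle) (ε : ℝ) (hε : 0 < ε) :
    ∃ t ∈ S.T, 0 < S.P {ω | dPlus (S.φ t ω x) (S.φ t ω y) < ε} := by
  by_contra! hcon
  simp only [nonpos_iff_eq_zero] at hcon
  let R : Set ℝ := {c | ∃ t ∈ S.T, 0 < S.P {ω | dPlus (S.φ t ω x) (S.φ t ω y) < c}}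
  haveI := S.P_prob
  have hRup : ∀ c, dPlus x y < c → c ∈ R := by
    intro c hc
    refine ⟨0, S.zero_mem_s2, ?_⟩
    simp [S.φ_zero, hc]
  have hRne : R.Nonempty := ⟨_, hRup (dPlus x y + 1) (by linarith)⟩
  have hRlow : ∀ c ∈ R, ε ≤ c := by
    rintro c ⟨t, ht, hp⟩
    by_contra! hlt
    apply hp.ne'
    exact measure_mono_null (fun ω hω => lt_trans hω hlt) (hcon t ht)
  have hbdd : BddBelow R := ⟨ε, hRlow⟩
  set r := sInf R with hr
  have hr0 : 0 < r := hε.trans_le (le_csInf hRne hRlow)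
  have hr1 : r < 1 := by
    refine lt_of_le_of_lt ?_ (dPlus_lt_one x y)
    refine le_of_forall_gt_imp_ge_of_dense fun c hc => csInf_le hbdd (hRup c hc)
  have hlow : ∀ t ∈ S.T, S.P {ω | dPlus (S.φ t ω x) (S.φ t ω y) < r} = 0 := by
    intro t ht
    have hsub : {ω | dPlus (S.φ t ω x) (S.φ t ω y) < r} ⊆
        ⋃ k : ℕ, {ω | dPlus (S.φ t ω x) (S.φ t ω y) < r - 1 / ((k : ℝ) + 1)} := by
      intro ω hω
      simp only [mem_ofPred_eq] at hω
      obtain ⟨k, hk⟩ := exists_nat_one_div_lt (sub_pos.2 hω)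
      refine mem_iUnion.2 ⟨k, ?_⟩
      simp only [mem_ofPred_eq]
      linarith
    refine measure_mono_null hsub (measure_iUnion_null fun k => ?_)
    by_contra hne
    have hmem : r - 1 / ((k : ℝ) + 1) ∈ R := ⟨t, ht, pos_iff_ne_zero.2 hne⟩
    have h1 := csInf_le hbdd hmem
    have h2 : (0 : ℝ) < 1 / ((k : ℝ) + 1) := Nat.one_div_pos_of_nat
    linarith
  have happ : ∀ δ > 0, ∃ t ∈ S.T,
      0 < S.P {ω | dPlus (S.φ t ω x) (S.φ t ω y) < r + δ} := by
    intro δ hδ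
    obtain ⟨c, ⟨t, ht, hp⟩, hc⟩ := exists_lt_of_csInf_lt hRne (show sInf R < r + δ by linarith)
    exact ⟨t, ht, hp.trans_le (measure_mono fun ω hω => lt_trans hω hc)⟩
  obtain ⟨u, v, huv, hnear⟩ := S.exists_limit x y r hr0 hr1 hlow happ
  have hne : u ≠ v := by
    rintro rfl
    rw [dPlus_self] at huv
    linarith
  have hcomp := h u v hne
  rw [huv] at hcomp
  obtain ⟨t, ht, hpos⟩ := S.exists_time u v hne r hcomp
  obtain ⟨δ, hδ, A, hAm, hA, hball⟩ := S.exists_ball u v hne r hr0 ht hpos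
  obtain ⟨s, hs, hE⟩ := hnear δ hδ
  have hEm : MeasurableSet[S.F s] {ω | (S.φ s ω x, S.φ s ω y) ∈ Metric.ball (u, v) δ} :=
    (S.pair_meas hs x y) measurableSet_ball
  have hAm' : MeasurableSet[⨆ s ∈ S.T, S.F s] A :=
    (le_iSup₂ (f := fun s (_ : s ∈ S.T) => S.F s) t ht) A hAm
  have hind := S.θ_indep s hs _ A hEm hAm'
  have hprod := ENNReal.mul_pos hE.ne' hA.ne'
  rw [← hind] at hprod
  apply hprod.ne'
  refine measure_mono_null ?_ (hlow (s + t) (S.add_mem_s2 hs ht))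
  rintro ω ⟨hω1, hω2⟩
  simp only [mem_ofPred_eq, S.φ_cocycle s hs t ht]
  exact hball _ hω2 _ hω1
end
end
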